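/- arXiv:2111.03955 — 4 statements merged into one kernel-verified Lean document; each statement's English description precedes it below -/
import Mathlib

section
/- Let d ≥ 1, let A be a real d×d matrix with det A = 1, and let φ : ℝ^d → ℝ^d be continuously differentiable, bounded, with bounded derivative, such that det(A + Dφ(ξ)) = 1 for every ξ ∈ ℝ^d. Then the map Φ(ξ) = Aξ + φ(ξ) is a bijection of ℝ^d whose inverse is continuously differentiable, Φ preserves Lebesgue measure (the pushforward of Lebesgue measure under Φ is Lebesgue measure), and the inverse map has the form Φ⁻¹(x) = A⁻¹x − g(x) where g : ℝ^d → ℝ^d is bounded and continuously differentiable with bounded derivative. -/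
open MeasureTheory

/-- A proper local homeomorphism of a simply connected space is bijective. -/
theorem bijective_of_proper_local {E : Type*} [TopologicalSpace E] [T2Space E] [Nonempty E]
    [SimplyConnectedSpace E] [LocallyPathConnectedSpace E]
    (f : E → E) (hl : IsLocalHomeomorph f) (hp : IsProperMap f) : Function.Bijective f := by
  have hfin : ∀ x, (f ⁻¹' {x}).Finite := by
    intro x
    have hc : IsCompact (f ⁻¹' {x}) := hp.isCompact_preimage isCompact_singleton
    refine hc.finite ?_
    refine IsDiscrete.of_openPartialHomeomorph f subset_rfl ?_
    intro e _
    obtain ⟨ψ, h1, h2⟩ := hl e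
    exact ⟨ψ, h1, h2.symm⟩
  have hcov : IsCoveringMap f := by
    rw [isCoveringMap_iff_isCoveringMapOn_univ]
    refine hp.isClosedMap.isCoveringMapOn_of_isLocalHomeomorphOn (fun x _ => hfin x) ?_
    exact hl.isLocalHomeomorphOn.mono (Set.subset_univ _)
  have key : ∀ a : E, ∃ F : C(E, E), F (f a) = a ∧ ∀ x, f (F x) = x := by
    intro a
    obtain ⟨F, ⟨h1, h2⟩, -⟩ :=
      hcov.existsUnique_continuousMap_lifts (ContinuousMap.id E) (f a) a rfl
    exact ⟨F, h1, fun x => congrFun h2 x⟩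
  constructor
  · intro a b hab
    obtain ⟨F, h1, h2⟩ := key a
    have h3 : (fun x => F (f x)) = id := by
      refine hcov.eq_of_comp_eq (F.continuous.comp hl.continuous) continuous_id ?_ a h1
      funext x
      exact h2 (f x)
    have h4 : F (f b) = b := congrFun h3 b
    rw [← h1, ← h4, hab]
  · intro x
    obtain ⟨F, h1, h2⟩ := key x
    exact ⟨F x, h2 x⟩

/-- Inverses of operators with determinant one and bounded norm are uniformly bounded. -/
theorem bounded_inverse_of_det_one (d : ℕ) (R : ℝ) :
    ∃ C : ℝ, ∀ e : (Fin d → ℝ) ≃L[ℝ] (Fin d → ℝ),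
      ‖(e : (Fin d → ℝ) →L[ℝ] (Fin d → ℝ))‖ ≤ R →
      (e : (Fin d → ℝ) →L[ℝ] (Fin d → ℝ)).det = 1 →
      ‖(e.symm : (Fin d → ℝ) →L[ℝ] (Fin d → ℝ))‖ ≤ C := by
  have hdc : Continuous (fun L : (Fin d → ℝ) →L[ℝ] (Fin d → ℝ) => L.det) :=
    ContinuousLinearMap.continuous_det
  have hK : IsCompact {L : (Fin d → ℝ) →L[ℝ] (Fin d → ℝ) | ‖L‖ ≤ R ∧ L.det = 1} := by
    refine (isCompact_closedBall (0 : (Fin d → ℝ) →L[ℝ] (Fin d → ℝ)) R).of_isClosed_subset ?_ ?_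
    · exact (isClosed_le continuous_norm continuous_const).inter
        (isClosed_eq hdc continuous_const)
    · intro L hL
      simpa using hL.1
  obtain ⟨C, hC⟩ := hK.exists_bound_of_continuousOn
    (f := fun L : (Fin d → ℝ) →L[ℝ] (Fin d → ℝ) => ContinuousLinearMap.inverse L) (by
      intro L hL
      have h := contDiffAt_map_inverse (𝕜 := ℝ) (n := 0)
        (L.toContinuousLinearEquivOfDetNeZero (by rw [hL.2]; exact one_ne_zero))
      rw [ContinuousLinearMap.coe_toContinuousLinearEquivOfDetNeZero] at h
      exact h.continuousAt.continuousWithinAt)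
  refine ⟨C, fun e h1 h2 => ?_⟩
  have := hC _ ⟨h1, h2⟩
  simpa using this

theorem stmt0_aux (d : ℕ) (L : (Fin d → ℝ) ≃L[ℝ] (Fin d → ℝ))
    (φ : (Fin d → ℝ) → (Fin d → ℝ)) (hφ : ContDiff ℝ 1 φ)
    (hφbdd : ∃ M : ℝ, ∀ ξ, ‖φ ξ‖ ≤ M)
    (hφder : ∃ M : ℝ, ∀ ξ, ‖fderiv ℝ φ ξ‖ ≤ M)
    (hdet : ∀ ξ, ((L : (Fin d → ℝ) →L[ℝ] (Fin d → ℝ)) + fderiv ℝ φ ξ).det = 1) :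
    Function.Bijective (fun ξ => L ξ + φ ξ) ∧
    Measure.map (fun ξ => L ξ + φ ξ) volume = volume ∧
    ∃ g : (Fin d → ℝ) → (Fin d → ℝ),
      ContDiff ℝ 1 g ∧
      (∃ M : ℝ, ∀ x, ‖g x‖ ≤ M) ∧
      (∃ M : ℝ, ∀ x, ‖fderiv ℝ g x‖ ≤ M) ∧
      Function.LeftInverse (fun x => L.symm x - g x) (fun ξ => L ξ + φ ξ) ∧
      Function.RightInverse (fun x => L.symm x - g x) (fun ξ => L ξ + φ ξ) := by
  obtain ⟨M, hM⟩ := hφbdd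
  obtain ⟨N, hN⟩ := hφder
  set f : (Fin d → ℝ) → (Fin d → ℝ) := fun ξ => L ξ + φ ξ with hf
  let f' : (Fin d → ℝ) → (Fin d → ℝ) ≃L[ℝ] (Fin d → ℝ) := fun ξ =>
    ((L : (Fin d → ℝ) →L[ℝ] (Fin d → ℝ)) + fderiv ℝ φ ξ).toContinuousLinearEquivOfDetNeZero
      (by rw [hdet]; exact one_ne_zero)
  have hf'c : ∀ ξ, (f' ξ : (Fin d → ℝ) →L[ℝ] (Fin d → ℝ)) =
      (L : (Fin d → ℝ) →L[ℝ] (Fin d → ℝ)) + fderiv ℝ φ ξ := fun ξ =>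
    ContinuousLinearMap.coe_toContinuousLinearEquivOfDetNeZero _ _
  have hfC : ContDiff ℝ 1 f := L.contDiff.add hφ
  have hfd : ∀ ξ, HasFDerivAt f (f' ξ : (Fin d → ℝ) →L[ℝ] (Fin d → ℝ)) ξ := by
    intro ξ
    rw [hf'c]
    exact L.hasFDerivAt.add (hφ.differentiable one_ne_zero ξ).hasFDerivAt
  have hl : IsLocalHomeomorph f := by
    refine IsLocalHomeomorph.mk f fun ξ => ?_
    exact ⟨hfC.contDiffAt.toOpenPartialHomeomorph f (hfd ξ) one_ne_zero,
      hfC.contDiffAt.mem_toOpenPartialHomeomorph_source (hfd ξ) one_ne_zero, fun _ _ => rfl⟩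
  have hp : IsProperMap f := by
    rw [isProperMap_iff_tendsto_cocompact]
    refine ⟨hfC.continuous, ?_⟩
    rw [← Metric.cobounded_eq_cocompact, ← tendsto_norm_atTop_iff_cobounded]
    have h1 : Filter.Tendsto (fun ξ => ‖L ξ‖ - M) (Bornology.cobounded (Fin d → ℝ))
        Filter.atTop := by
      refine Filter.tendsto_atTop_add_const_right _ (-M) ?_
      rw [tendsto_norm_atTop_iff_cobounded, Metric.cobounded_eq_cocompact]
      exact L.toHomeomorph.isClosedEmbedding.tendsto_cocompact
    refine Filter.tendsto_atTop_mono (fun ξ => ?_) h1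
    have h2 : ‖L ξ‖ ≤ ‖L ξ + φ ξ‖ + ‖φ ξ‖ := by
      simpa using norm_sub_le (L ξ + φ ξ) (φ ξ)
    have h3 := hM ξ
    change _ ≤ ‖L ξ + φ ξ‖
    linarith
  have hb : Function.Bijective f := bijective_of_proper_local f hl hp
  let H : (Fin d → ℝ) ≃ₜ (Fin d → ℝ) := hl.toHomeomorphOfBijective hb
  have hH : ∀ ξ, H ξ = f ξ := fun ξ => rfl
  have hHd : ∀ ξ, HasFDerivAt H (f' ξ : (Fin d → ℝ) →L[ℝ] (Fin d → ℝ)) ξ := hfd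
  have hsC : ContDiff ℝ 1 H.symm := H.contDiff_symm hHd hfC
  have hsd : ∀ x, HasFDerivAt H.symm ((f' (H.symm x)).symm : (Fin d → ℝ) →L[ℝ] (Fin d → ℝ)) x :=
    fun x => H.toOpenPartialHomeomorph.hasFDerivAt_symm (Set.mem_univ x) (hHd _)
  refine ⟨hb, ?_, fun x => L.symm x - H.symm x, L.symm.contDiff.sub hsC, ?_, ?_, ?_, ?_⟩
  · have h := map_withDensity_abs_det_fderiv_eq_addHaar (volume : Measure (Fin d → ℝ))
      (s := Set.univ) (f := f) (f' := fun ξ => (f' ξ : (Fin d → ℝ) →L[ℝ] (Fin d → ℝ)))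
      MeasurableSet.univ.nullMeasurableSet (fun x _ => (hfd x).hasFDerivWithinAt)
      hb.1.injOn
    simp only [hf'c, hdet, Set.image_univ, hb.2.range_eq, Measure.restrict_univ, abs_one,
      ENNReal.ofReal_one] at h
    have h1 : (volume : Measure (Fin d → ℝ)).withDensity (fun _ => 1) = volume :=
      withDensity_one
    rwa [h1] at h
  · refine ⟨‖(L.symm : (Fin d → ℝ) →L[ℝ] (Fin d → ℝ))‖ * M, fun x => ?_⟩
    obtain ⟨ξ, rfl⟩ := H.surjective x
    have h1 : L.symm (H ξ) - H.symm (H ξ) = L.symm (φ ξ) := by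
      rw [H.symm_apply_apply, hH]
      simp [hf]
    change ‖L.symm (H ξ) - H.symm (H ξ)‖ ≤ _
    rw [h1]
    exact (L.symm : (Fin d → ℝ) →L[ℝ] (Fin d → ℝ)).le_of_opNorm_le_of_le le_rfl (hM ξ)
  · obtain ⟨C, hC⟩ := bounded_inverse_of_det_one d
      (‖(L : (Fin d → ℝ) →L[ℝ] (Fin d → ℝ))‖ + N)
    refine ⟨‖(L.symm : (Fin d → ℝ) →L[ℝ] (Fin d → ℝ))‖ + C, fun x => ?_⟩
    have hg := (L.symm.hasFDerivAt.sub (hsd x)).fderiv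
    change ‖fderiv ℝ (⇑L.symm - ⇑H.symm) x‖ ≤ _
    rw [hg]
    refine (norm_sub_le _ _).trans (add_le_add le_rfl (hC _ ?_ ?_))
    · rw [hf'c]
      exact (norm_add_le _ _).trans (add_le_add le_rfl (hN _))
    · rw [hf'c, hdet]
  · intro ξ
    have : H.symm (f ξ) = ξ := H.symm_apply_apply ξ
    simp [this]
  · intro x
    have : f (H.symm x) = x := H.apply_symm_apply x
    simp [this]

/-- Let `d ≥ 1`, let `A` be a real `d×d` matrix with `det A = 1`, and let
`φ : ℝ^d → ℝ^d` be continuously differentiable, bounded, with bounded derivative, such that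
`det (A + Dφ(ξ)) = 1` for every `ξ`.  Then `Φ(ξ) = Aξ + φ(ξ)` is a bijection of `ℝ^d`,
`Φ` preserves Lebesgue measure, and the inverse map has the form `Φ⁻¹(x) = A⁻¹x − g(x)`
with `g` bounded, continuously differentiable, with bounded derivative (in particular the
inverse is continuously differentiable). -/
theorem stmt0 (d : ℕ) (hd : 1 ≤ d) (A : Matrix (Fin d) (Fin d) ℝ) (hA : A.det = 1)
    (φ : (Fin d → ℝ) → (Fin d → ℝ)) (hφ : ContDiff ℝ 1 φ)
    (hφbdd : ∃ M : ℝ, ∀ ξ, ‖φ ξ‖ ≤ M)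
    (hφder : ∃ M : ℝ, ∀ ξ, ‖fderiv ℝ φ ξ‖ ≤ M)
    (hdet : ∀ ξ, (A + LinearMap.toMatrix'
        ((fderiv ℝ φ ξ).toLinearMap)).det = 1) :
    Function.Bijective (fun ξ => A.mulVec ξ + φ ξ) ∧
    Measure.map (fun ξ => A.mulVec ξ + φ ξ) volume = volume ∧
    ∃ g : (Fin d → ℝ) → (Fin d → ℝ),
      ContDiff ℝ 1 g ∧
      (∃ M : ℝ, ∀ x, ‖g x‖ ≤ M) ∧
      (∃ M : ℝ, ∀ x, ‖fderiv ℝ g x‖ ≤ M) ∧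
      Function.LeftInverse (fun x => A⁻¹.mulVec x - g x) (fun ξ => A.mulVec ξ + φ ξ) ∧
      Function.RightInverse (fun x => A⁻¹.mulVec x - g x) (fun ξ => A.mulVec ξ + φ ξ) := by
  have hdA : IsUnit A.det := by rw [hA]; exact isUnit_one
  have h1 : A⁻¹ * A = 1 := Matrix.nonsing_inv_mul A hdA
  have h2 : A * A⁻¹ = 1 := Matrix.mul_nonsing_inv A hdA
  let L : (Fin d → ℝ) ≃L[ℝ] (Fin d → ℝ) :=
    (Matrix.toLin'OfInv h1 h2).toContinuousLinearEquiv
  have hL : ∀ ξ, L ξ = A.mulVec ξ := fun ξ => Matrix.toLin'_apply A ξ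
  have hLs : ∀ ξ, L.symm ξ = A⁻¹.mulVec ξ := fun ξ => Matrix.toLin'_apply A⁻¹ ξ
  have h := stmt0_aux d L φ hφ hφbdd hφder (by
    intro ξ
    rw [← hdet ξ, ContinuousLinearMap.det, ← LinearMap.det_toMatrix']
    congr 1
    have e : ((((L : (Fin d → ℝ) →L[ℝ] (Fin d → ℝ)) + fderiv ℝ φ ξ :
        (Fin d → ℝ) →L[ℝ] (Fin d → ℝ))) : (Fin d → ℝ) →ₗ[ℝ] (Fin d → ℝ)) =
        Matrix.toLin' A + (fderiv ℝ φ ξ).toLinearMap := rfl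
    rw [e, map_add, LinearMap.toMatrix'_toLin'])
  simp only [hL, hLs] at h
  exact h
end

section
/- Let s₁ < s₂ be real numbers, let 0 < α < 1, set s = α s₁ + (1 − α) s₂, and let 0 < q < ∞. There exists a constant C, depending only on s₁, s₂, α, q, such that for every sequence (a_j)_{j∈ℤ} of complex numbers: (Σ_{j∈ℤ} 2^{s j q} |a_j|^q)^{1/q} ≤ C · (sup_{j∈ℤ} 2^{s₁ j} |a_j|)^α · (sup_{j∈ℤ} 2^{s₂ j} |a_j|)^{1−α} (with the convention that the left side is finite whenever both suprema on the right are finite). -/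
open scoped ENNReal NNReal

lemma two_rpow_of_pos_fin (x : ℝ≥0∞) (h0 : x ≠ 0) (ht : x ≠ ⊤) :
    ∃ u : ℝ, x = (2 : ℝ≥0∞) ^ u := by
  have hp := ENNReal.toReal_pos h0 ht
  refine ⟨Real.logb 2 x.toReal, ?_⟩
  have h2 : (2 : ℝ≥0∞) = ENNReal.ofReal 2 := by simp
  rw [h2, ENNReal.ofReal_rpow_of_pos (by norm_num), Real.rpow_logb (by norm_num) (by norm_num) hp,
    ENNReal.ofReal_toReal ht]

lemma two_add (x y : ℝ) : (2 : ℝ≥0∞) ^ (x + y) = (2 : ℝ≥0∞) ^ x * (2 : ℝ≥0∞) ^ y :=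
  ENNReal.rpow_add _ _ (by norm_num) (by norm_num)

lemma two_le {x y : ℝ} : (2 : ℝ≥0∞) ^ x ≤ (2 : ℝ≥0∞) ^ y ↔ x ≤ y := by
  have h2 : (2 : ℝ≥0∞) = ENNReal.ofReal 2 := by simp
  rw [h2, ENNReal.ofReal_rpow_of_pos (by norm_num), ENNReal.ofReal_rpow_of_pos (by norm_num),
    ENNReal.ofReal_le_ofReal_iff (by positivity), Real.rpow_le_rpow_left_iff (by norm_num)]

lemma sum_fin (b : ℝ) (hb : 0 < b) : (∑' j : ℤ, (2 : ℝ≥0∞) ^ (-(b * |(j : ℝ)|))) ≠ ⊤ := by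
  have h2 : (2 : ℝ≥0∞) = ENNReal.ofReal 2 := by simp
  have hs : Summable (fun j : ℤ => (2 : ℝ) ^ (-(b * |(j : ℝ)|))) := by
    have hg : Summable (fun n : ℕ => ((2 : ℝ) ^ (-b)) ^ n) :=
      summable_geometric_of_lt_one (by positivity)
        (Real.rpow_lt_one_of_one_lt_of_neg (by norm_num) (by linarith))
    have he : ∀ n : ℕ, ((2 : ℝ) ^ (-b)) ^ n = (2 : ℝ) ^ (-(b * |(n : ℝ)|)) := by
      intro n
      rw [← Real.rpow_natCast, ← Real.rpow_mul (by norm_num), Nat.abs_cast, neg_mul]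
    simp_rw [he] at hg
    refine Summable.of_nat_of_neg ?_ ?_
    · simpa using hg
    · simpa using hg
  have := hs.tsum_ofReal_ne_top
  simpa only [h2, ENNReal.ofReal_rpow_of_pos (show (0 : ℝ) < 2 by norm_num)] using this

lemma expo_bound (s₁ s₂ α u v w j k c : ℝ) (hα0 : 0 < α) (hα1 : α < 1)
    (hc0 : 0 < c) (h1 : c ≤ (s₂ - s₁) * α) (h2 : c ≤ (s₂ - s₁) * (1 - α))
    (hk : k * (s₂ - s₁) ≤ v - u) (hk' : v - u ≤ (k + 1) * (s₂ - s₁))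
    (hu : s₁ * j + w ≤ u) (hv : s₂ * j + w ≤ v) (hjk : j ≤ k ∨ k + 1 ≤ j) :
    (α * s₁ + (1 - α) * s₂) * j + w ≤ α * u + (1 - α) * v + c + -(c * |j - k|) := by
  rcases hjk with h | h
  · rw [abs_of_nonpos (by linarith)]
    have e1 := mul_le_mul_of_nonneg_left hk (by linarith : 0 ≤ 1 - α)
    have e2 := mul_le_mul_of_nonneg_left h2 (by linarith : 0 ≤ k - j)
    nlinarith
  · rw [abs_of_nonneg (by linarith)]
    have e1 := mul_le_mul_of_nonneg_left hk' hα0.le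
    have e2 := mul_le_mul_of_nonneg_left h1 (by linarith : 0 ≤ j - k - 1)
    nlinarith

/-- **Oru's lemma.** Weighted `ℓ^q`–`ℓ^∞` interpolation for two-sided
sequences: with `s = α s₁ + (1−α) s₂`, `s₁ < s₂`, `0 < α < 1`, `0 < q < ∞`,
`(Σ_j 2^{s j q} |a_j|^q)^{1/q} ≤ C (sup_j 2^{s₁ j} |a_j|)^α (sup_j 2^{s₂ j} |a_j|)^{1−α}`. -/
theorem stmt2 (s₁ s₂ α q : ℝ) (h12 : s₁ < s₂) (hα0 : 0 < α) (hα1 : α < 1) (hq : 0 < q) :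
    ∃ C : ℝ, 0 < C ∧ ∀ a : ℤ → ℂ,
      (∑' j : ℤ, ((2 : ℝ≥0∞) ^ ((α * s₁ + (1 - α) * s₂) * (j : ℝ)) * (‖a j‖₊ : ℝ≥0∞)) ^ q)
          ^ (1 / q)
        ≤ ENNReal.ofReal C *
            (⨆ j : ℤ, (2 : ℝ≥0∞) ^ (s₁ * (j : ℝ)) * (‖a j‖₊ : ℝ≥0∞)) ^ α *
            (⨆ j : ℤ, (2 : ℝ≥0∞) ^ (s₂ * (j : ℝ)) * (‖a j‖₊ : ℝ≥0∞)) ^ (1 - α) := by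
  have hd : 0 < s₂ - s₁ := by linarith
  have hβ : 0 < 1 - α := by linarith
  obtain ⟨c, hc0, hc1, hc2⟩ : ∃ c : ℝ, 0 < c ∧ c ≤ (s₂ - s₁) * α ∧ c ≤ (s₂ - s₁) * (1 - α) :=
    ⟨min ((s₂ - s₁) * α) ((s₂ - s₁) * (1 - α)), lt_min (by positivity) (by positivity),
      min_le_left _ _, min_le_right _ _⟩
  have hpos : ∀ x : ℝ, (2 : ℝ≥0∞) ^ x ≠ 0 := fun x => by simp [ENNReal.rpow_eq_zero_iff]
  have hfin : ∀ x : ℝ, (2 : ℝ≥0∞) ^ x ≠ ⊤ := fun x => by simp [ENNReal.rpow_eq_top_iff]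
  set S := ∑' j : ℤ, (2 : ℝ≥0∞) ^ (-((c * q) * |(j : ℝ)|)) with hS
  have hSt : S ≠ ⊤ := sum_fin (c * q) (by positivity)
  have hS0 : S ≠ 0 := by
    intro h
    rw [hS, ENNReal.tsum_eq_zero] at h
    exact hpos _ (h 0)
  have hSq0 : S ^ (1 / q) ≠ 0 := by
    simp [ENNReal.rpow_eq_zero_iff, hS0, hSt]
  have hSqt : S ^ (1 / q) ≠ ⊤ := ENNReal.rpow_ne_top_of_nonneg (by positivity) hSt
  have hCt : (2 : ℝ≥0∞) ^ c * S ^ (1 / q) ≠ ⊤ := ENNReal.mul_ne_top (hfin c) hSqt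
  have hC0 : (2 : ℝ≥0∞) ^ c * S ^ (1 / q) ≠ 0 := mul_ne_zero (hpos c) hSq0
  refine ⟨((2 : ℝ≥0∞) ^ c * S ^ (1 / q)).toReal, ENNReal.toReal_pos hC0 hCt, ?_⟩
  intro a
  rw [ENNReal.ofReal_toReal hCt]
  set A := ⨆ j : ℤ, (2 : ℝ≥0∞) ^ (s₁ * (j : ℝ)) * (‖a j‖₊ : ℝ≥0∞) with hA
  set B := ⨆ j : ℤ, (2 : ℝ≥0∞) ^ (s₂ * (j : ℝ)) * (‖a j‖₊ : ℝ≥0∞) with hB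
  have hAj : ∀ j : ℤ, (2 : ℝ≥0∞) ^ (s₁ * (j : ℝ)) * (‖a j‖₊ : ℝ≥0∞) ≤ A :=
    fun j => le_iSup (fun j : ℤ => (2 : ℝ≥0∞) ^ (s₁ * (j : ℝ)) * (‖a j‖₊ : ℝ≥0∞)) j
  have hBj : ∀ j : ℤ, (2 : ℝ≥0∞) ^ (s₂ * (j : ℝ)) * (‖a j‖₊ : ℝ≥0∞) ≤ B :=
    fun j => le_iSup (fun j : ℤ => (2 : ℝ≥0∞) ^ (s₂ * (j : ℝ)) * (‖a j‖₊ : ℝ≥0∞)) j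
  by_cases hz : ∀ j, (‖a j‖₊ : ℝ≥0∞) = 0
  · simp only [hz, mul_zero, ENNReal.zero_rpow_of_pos hq, tsum_zero]
    rw [ENNReal.zero_rpow_of_pos (by positivity)]
    exact zero_le
  push Not at hz
  obtain ⟨i, hi⟩ := hz
  have hA0 : A ≠ 0 := fun h => mul_ne_zero (hpos _) hi (le_antisymm (h ▸ hAj i) zero_le)
  have hB0 : B ≠ 0 := fun h => mul_ne_zero (hpos _) hi (le_antisymm (h ▸ hBj i) zero_le)
  have hAα : A ^ α ≠ 0 := by simp [ENNReal.rpow_eq_zero_iff, hA0, hα0.le]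
  have hBα : B ^ (1 - α) ≠ 0 := by simp [ENNReal.rpow_eq_zero_iff, hB0, hα1.le]
  by_cases hAt : A = ⊤
  · rw [hAt, ENNReal.top_rpow_of_pos hα0, ENNReal.mul_top hC0, ENNReal.top_mul hBα]
    exact le_top
  by_cases hBt : B = ⊤
  · rw [hBt, ENNReal.top_rpow_of_pos hβ, ENNReal.mul_top (mul_ne_zero hC0 hAα)]
    exact le_top
  obtain ⟨u, hu⟩ := two_rpow_of_pos_fin A hA0 hAt
  obtain ⟨v, hv⟩ := two_rpow_of_pos_fin B hB0 hBt
  clear_value A B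
  subst hu hv
  set k : ℤ := ⌊(v - u) / (s₂ - s₁)⌋ with hk
  have hk1 : (k : ℝ) * (s₂ - s₁) ≤ v - u := (le_div_iff₀ hd).1 (Int.floor_le _)
  have hk2 : v - u ≤ ((k : ℝ) + 1) * (s₂ - s₁) :=
    (div_le_iff₀ hd).1 (Int.lt_floor_add_one _).le
  have key : ∀ j : ℤ,
      ((2 : ℝ≥0∞) ^ ((α * s₁ + (1 - α) * s₂) * (j : ℝ)) * (‖a j‖₊ : ℝ≥0∞)) ^ q ≤
      (2 : ℝ≥0∞) ^ ((α * u + (1 - α) * v + c) * q) *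
        (2 : ℝ≥0∞) ^ (-((c * q) * |((j - k : ℤ) : ℝ)|)) := by
    intro j
    by_cases hj : (‖a j‖₊ : ℝ≥0∞) = 0
    · simp [hj, hq]
    obtain ⟨w, hw⟩ := two_rpow_of_pos_fin _ hj ENNReal.coe_ne_top
    have e1 := hAj j
    have e2 := hBj j
    rw [hw, ← two_add, two_le] at e1 e2
    rw [hw, ← two_add, ← two_add, ← ENNReal.rpow_mul, two_le]
    have hjk : (j : ℝ) ≤ k ∨ (k : ℝ) + 1 ≤ j := by
      rcases le_or_gt j k with h | h
      · left; exact_mod_cast h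
      · right; exact_mod_cast h
    have := mul_le_mul_of_nonneg_right
      (expo_bound s₁ s₂ α u v w j k c hα0 hα1 hc0 hc1 hc2 hk1 hk2 e1 e2 hjk) hq.le
    push_cast
    linarith
  have hsum := ENNReal.tsum_le_tsum key
  rw [ENNReal.tsum_mul_left] at hsum
  have hshift : ∑' j : ℤ, (2 : ℝ≥0∞) ^ (-((c * q) * |((j - k : ℤ) : ℝ)|)) = S :=
    (Equiv.subRight k).tsum_eq (fun j : ℤ => (2 : ℝ≥0∞) ^ (-((c * q) * |(j : ℝ)|)))
  rw [hshift] at hsum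
  refine (ENNReal.rpow_le_rpow hsum (by positivity : 0 ≤ 1 / q)).trans (le_of_eq ?_)
  rw [ENNReal.mul_rpow_of_nonneg _ _ (by positivity), ← ENNReal.rpow_mul, ← ENNReal.rpow_mul,
    ← ENNReal.rpow_mul, mul_assoc _ q, mul_one_div_cancel hq.ne', mul_one, two_add, two_add,
    mul_comm α u, mul_comm (1 - α) v]
  ring
end

section
/- Let d ≥ 1, 0 < r < 1, and 2 ≤ p < ∞, and let a be a symbol of class S⁰_ph on ℝ^d. There exists a constant C, depending only on d, r, p and a, such that for every Schwartz function f on ℝ^d the Gagliardo seminorm of 𝔞[f] satisfies [𝔞[f]]_{r,p} ≤ C · [f]_{r,p}. -/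
open MeasureTheory ENNReal
open scoped RealInnerProductSpace

noncomputable section

/-- Shorthand for Euclidean space `ℝ^d`. -/
abbrev Ed (d : ℕ) := EuclideanSpace ℝ (Fin d)

/-- The homogeneous Besov (Gagliardo) seminorm `[f]_{r,p}`. -/
def gagliardo (d : ℕ) (r p : ℝ) {F : Type*} [NormedAddCommGroup F] (f : Ed d → F) : ℝ≥0∞ :=
  (∫⁻ x, ∫⁻ y, (‖f x - f y‖₊ : ℝ≥0∞) ^ p / (‖x - y‖₊ : ℝ≥0∞) ^ (r * p + d)) ^ (1 / p)

/-- The homogeneous Hölder seminorm `{f}_r`. -/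
def holderSemi (d : ℕ) (r : ℝ) {F : Type*} [NormedAddCommGroup F] (f : Ed d → F) : ℝ≥0∞ :=
  ⨆ x, ⨆ y, (‖f x - f y‖₊ : ℝ≥0∞) / (‖x - y‖₊ : ℝ≥0∞) ^ r

/-- The Fourier transform `f̂(κ) = ∫ e^{-i x·κ} f(x) dx`. -/
def ftransform (d : ℕ) (f : Ed d → ℂ) (κ : Ed d) : ℂ :=
  ∫ x, Complex.exp (-(Complex.I * (⟪x, κ⟫ : ℂ))) * f x

/-- The homogeneous Sobolev seminorm `[f]_θ = ((2π)^{-d} ∫ |κ|^{2θ} |f̂(κ)|² dκ)^{1/2}`. -/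
def sobolevSemi (d : ℕ) (θ : ℝ) (f : Ed d → ℂ) : ℝ≥0∞ :=
  (ENNReal.ofReal ((2 * Real.pi) ^ (-(d : ℝ))) *
    ∫⁻ κ, (‖κ‖₊ : ℝ≥0∞) ^ (2 * θ) * (‖ftransform d f κ‖₊ : ℝ≥0∞) ^ (2 : ℕ)) ^ ((1 : ℝ) / 2)

/-- A symbol of class `S⁰_{ph}`: smooth away from the origin and positively
homogeneous of degree `0`. -/
def IsSymbol0 (d : ℕ) (a : Ed d → ℂ) : Prop :=
  ContDiffOn ℝ (⊤ : ℕ∞) a {0}ᶜ ∧ ∀ (c : ℝ) (κ : Ed d), 0 < c → κ ≠ 0 → a (c • κ) = a κ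

/-- The operator `𝔞[f](x) = (2π)^{-d} ∫ e^{i x·κ} a(κ) f̂(κ) dκ` associated with a symbol. -/
def symbOp (d : ℕ) (a : Ed d → ℂ) (f : Ed d → ℂ) (x : Ed d) : ℂ :=
  (((2 * Real.pi) ^ (-(d : ℝ)) : ℝ) : ℂ) *
    ∫ κ, Complex.exp (Complex.I * (⟪x, κ⟫ : ℂ)) * a κ * ftransform d f κ

/-- The partial derivative `∂_i f(x)`. -/
def pd (d : ℕ) (i : Fin d) (f : Ed d → ℝ) (x : Ed d) : ℝ :=
  fderiv ℝ f x (EuclideanSpace.single i 1)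

/-- The half-wave propagator `(e^{itD} g)(x) = (2π)^{-d} ∫ e^{i x·κ} e^{i t|κ|} ĝ(κ) dκ`. -/
def halfWave (d : ℕ) (t : ℝ) (g : Ed d → ℂ) (x : Ed d) : ℂ :=
  (((2 * Real.pi) ^ (-(d : ℝ)) : ℝ) : ℂ) *
    ∫ κ, Complex.exp (Complex.I * ((⟪x, κ⟫ : ℂ) + (t : ℂ) * ((‖κ‖ : ℝ) : ℂ))) *
      ftransform d g κ

end

open Set

lemma symb_exists_m (d : ℕ) (a : Ed d → ℂ) (ha : IsSymbol0 d a) :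
    ∃ m : SchwartzMap (Ed d) ℂ, m 0 = 0 ∧ ∃ B : ℝ, ∀ κ : Ed d, κ ≠ 0 →
      ∫ t in Ioi (0:ℝ), m (t • κ) * ((t⁻¹ : ℝ) : ℂ) = a κ ∧
      ∫⁻ t in Ioi (0:ℝ), ‖m (t • κ) * ((t⁻¹ : ℝ) : ℂ)‖ₑ ≤ ENNReal.ofReal B := by
  obtain ⟨hs, hh⟩ := ha
  let η : ContDiffBump (2:ℝ) := ⟨1/2, 1, by norm_num, by norm_num⟩
  have hη0 : ∀ u : ℝ, u ≤ 1 → η u = 0 := by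
    intro u hu
    apply η.zero_of_le_dist
    rw [Real.dist_eq, abs_of_nonpos (by linarith)]
    change (1:ℝ) ≤ _
    linarith
  have hη3 : ∀ u : ℝ, 3 ≤ u → η u = 0 := by
    intro u hu
    apply η.zero_of_le_dist
    rw [Real.dist_eq, abs_of_nonneg (by linarith)]
    change (1:ℝ) ≤ _
    linarith
  set g : ℝ → ℝ := fun u => η u * u⁻¹ with hg
  have hgi : Integrable g := by
    have h1 : Integrable (fun u => η u) := η.continuous.integrable_of_hasCompactSupport η.hasCompactSupport
    refine h1.mono (by
      have : Measurable (fun u => η u) := η.continuous.measurable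
      fun_prop) (Filter.Eventually.of_forall fun u => ?_)
    rcases le_or_gt u 1 with h | h
    · simp [hg, hη0 u h]
    · rw [hg, norm_mul]
      refine mul_le_of_le_one_right (norm_nonneg _) ?_
      rw [norm_inv, Real.norm_eq_abs, abs_of_pos (by linarith)]
      exact inv_le_one_of_one_le₀ h.le
  have hg0 : ∀ u, 0 < u → 0 ≤ g u := fun u hu => mul_nonneg η.nonneg (inv_nonneg.2 hu.le)
  set c : ℝ := ∫ u in Ioi (0:ℝ), g u with hc
  have hcpos : 0 < c := by
    rw [hc, setIntegral_pos_iff_support_of_nonneg_ae]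
    · refine lt_of_lt_of_le ?_ (measure_mono (s := Ioo (1:ℝ) 3) ?_)
      · simp
      · intro u hu
        refine ⟨?_, lt_trans zero_lt_one hu.1⟩
        have : 0 < η u := by
          apply η.pos_of_mem_ball
          rw [Metric.mem_ball, Real.dist_eq, abs_lt]
          change -(1:ℝ) < _ ∧ _ < (1:ℝ)
          constructor <;> linarith [hu.1, hu.2]
        have h2 : 0 < u := lt_trans zero_lt_one hu.1
        simp [hg, this.ne', h2.ne']
    · exact (ae_restrict_iff' measurableSet_Ioi).2 (Filter.Eventually.of_forall fun u hu => hg0 u hu)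
    · exact hgi.integrableOn
  let m0 : Ed d → ℂ := fun κ => a κ * ((η ‖κ‖ : ℝ) : ℂ) * ((c⁻¹ : ℝ) : ℂ)
  have hm1 : HasCompactSupport m0 := by
    refine HasCompactSupport.intro (isCompact_closedBall (0 : Ed d) 3) fun x hx => ?_
    simp only [Metric.mem_closedBall, dist_zero_right, not_le] at hx
    simp [m0, hη3 _ hx.le]
  have hm2 : ContDiff ℝ (⊤ : ℕ∞) m0 := by
    rw [contDiff_iff_contDiffAt]
    intro x
    by_cases hx : x = 0
    · subst hx
      have : m0 =ᶠ[nhds 0] fun _ => 0 := by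
        filter_upwards [Metric.ball_mem_nhds (0 : Ed d) one_pos] with y hy
        simp only [Metric.mem_ball, dist_zero_right] at hy
        simp [m0, hη0 _ hy.le]
      exact contDiffAt_const.congr_of_eventuallyEq this
    · have h1 : ContDiffAt ℝ (⊤ : ℕ∞) a x := hs.contDiffAt (isOpen_compl_singleton.mem_nhds hx)
      have h2 : ContDiffAt ℝ (⊤ : ℕ∞) (fun κ : Ed d => η ‖κ‖) x :=
        η.contDiff.contDiffAt.comp x (contDiffAt_norm ℝ hx)
      have h3 : ContDiffAt ℝ (⊤ : ℕ∞) (fun κ : Ed d => ((η ‖κ‖ : ℝ) : ℂ)) x :=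
        Complex.ofRealCLM.contDiff.contDiffAt.comp x h2
      exact (h1.mul h3).mul contDiffAt_const
  have hbd : ∃ A : ℝ, ∀ κ : Ed d, κ ≠ 0 → ‖a κ‖ ≤ A := by
    have hcomp : IsCompact (Metric.sphere (0 : Ed d) 1) := isCompact_sphere _ _
    have hcont : ContinuousOn a (Metric.sphere (0 : Ed d) 1) := hs.continuousOn.mono (by
      intro x hx h
      rw [mem_singleton_iff] at h
      subst h
      simp at hx)
    obtain ⟨A, hA⟩ := hcomp.exists_bound_of_continuousOn hcont
    refine ⟨A, fun κ hκ => ?_⟩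
    have h0 : 0 < ‖κ‖ := norm_pos_iff.2 hκ
    rw [← hh ‖κ‖⁻¹ κ (inv_pos.2 h0) hκ]
    apply hA
    simp [norm_smul, h0.ne']
  obtain ⟨A, hA⟩ := hbd
  have hkey : ∀ κ : Ed d, κ ≠ 0 → ∀ t ∈ Ioi (0:ℝ), m0 (t • κ) * ((t⁻¹ : ℝ) : ℂ) =
      (a κ * ((c⁻¹ * ‖κ‖ : ℝ) : ℂ)) * ((g (t * ‖κ‖) : ℝ) : ℂ) := by
    intro κ hκ t ht
    have ht : 0 < t := ht
    have h0 : 0 < ‖κ‖ := norm_pos_iff.2 hκ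
    have h0' : (‖κ‖ : ℂ) ≠ 0 := by exact_mod_cast h0.ne'
    have ht' : (t : ℂ) ≠ 0 := by exact_mod_cast ht.ne'
    have hc' : (c : ℂ) ≠ 0 := by exact_mod_cast hcpos.ne'
    simp only [m0, hg, hh t κ ht hκ, norm_smul, Real.norm_eq_abs, abs_of_pos ht]
    push_cast
    field_simp
  have hgint : ∀ κ : Ed d, κ ≠ 0 → ∫ t in Ioi (0:ℝ), g (t * ‖κ‖) = ‖κ‖⁻¹ * c := by
    intro κ hκ
    have h0 : 0 < ‖κ‖ := norm_pos_iff.2 hκ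
    rw [integral_comp_mul_right_Ioi g 0 h0, zero_mul, smul_eq_mul]
  refine ⟨hm1.toSchwartzMap hm2, ?_, A, fun κ hκ => ?_⟩
  · change m0 0 = 0
    simp [m0, hη0 0 zero_le_one]
  have h0 : 0 < ‖κ‖ := norm_pos_iff.2 hκ
  constructor
  · change ∫ t in Ioi (0:ℝ), m0 (t • κ) * ((t⁻¹ : ℝ) : ℂ) = a κ
    rw [setIntegral_congr_fun measurableSet_Ioi (hkey κ hκ), integral_const_mul,
      integral_complex_ofReal, hgint κ hκ]
    have h0' : (‖κ‖ : ℂ) ≠ 0 := by exact_mod_cast h0.ne'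
    have hc' : (c : ℂ) ≠ 0 := by exact_mod_cast hcpos.ne'
    push_cast
    field_simp
  · change ∫⁻ t in Ioi (0:ℝ), ‖m0 (t • κ) * ((t⁻¹ : ℝ) : ℂ)‖ₑ ≤ _
    have : ∀ t ∈ Ioi (0:ℝ), ‖m0 (t • κ) * ((t⁻¹ : ℝ) : ℂ)‖ₑ =
        ENNReal.ofReal (‖a κ‖ * (c⁻¹ * ‖κ‖) * g (t * ‖κ‖)) := by
      intro t ht
      have ht' : 0 < t := ht
      rw [hkey κ hκ t ht, ← ofReal_norm, norm_mul, norm_mul, Complex.norm_real,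
        Complex.norm_real, Real.norm_of_nonneg (hg0 _ (mul_pos ht' h0)),
        Real.norm_of_nonneg (by positivity)]
    rw [setLIntegral_congr_fun measurableSet_Ioi this, ← ofReal_integral_eq_lintegral_ofReal]
    · apply ENNReal.ofReal_le_ofReal
      rw [integral_const_mul, hgint κ hκ]
      refine le_trans (le_of_eq ?_) (hA κ hκ)
      field_simp
    · exact ((hgi.comp_mul_right' h0.ne').const_mul _).integrableOn
    · refine (ae_restrict_iff' measurableSet_Ioi).2 (Filter.Eventually.of_forall fun u hu => ?_)
      have := hg0 _ (mul_pos hu h0)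
      simp only [Pi.zero_apply]
      positivity


lemma symb_exp_eq (d : ℕ) (m : SchwartzMap (Ed d) ℂ) (z : Ed d) :
    ∫ κ, Complex.exp (Complex.I * (⟪z, κ⟫ : ℂ)) * m κ =
      (FourierTransformInv.fourierInv m) ((2 * Real.pi)⁻¹ • z) := by
  rw [SchwartzMap.fourierInv_coe, Real.fourierInv_eq']
  congr 1
  ext κ
  rw [smul_eq_mul, inner_smul_right, real_inner_comm]
  congr 2
  have : (Real.pi : ℂ) ≠ 0 := by exact_mod_cast Real.pi_ne_zero
  push_cast
  field_simp

lemma symb_ft_eq (d : ℕ) (f : SchwartzMap (Ed d) ℂ) (κ : Ed d) :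
    ftransform d f κ = (FourierTransform.fourier f) ((2 * Real.pi)⁻¹ • κ) := by
  rw [SchwartzMap.fourier_coe, Real.fourier_eq', ftransform]
  congr 1
  ext x
  rw [smul_eq_mul, inner_smul_right]
  congr 2
  have : (Real.pi : ℂ) ≠ 0 := by exact_mod_cast Real.pi_ne_zero
  push_cast
  field_simp

lemma symb_ft_integrable (d : ℕ) (f : SchwartzMap (Ed d) ℂ) : Integrable (ftransform d f) := by
  have : ftransform d f = fun κ => (FourierTransform.fourier f) ((2 * Real.pi)⁻¹ • κ) := by
    ext κ; exact symb_ft_eq d f κ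
  rw [this]
  exact (SchwartzMap.integrable (FourierTransform.fourier f)).comp_smul (by positivity)

lemma symb_ft_continuous (d : ℕ) (f : SchwartzMap (Ed d) ℂ) : Continuous (ftransform d f) := by
  have : ftransform d f = fun κ => (FourierTransform.fourier f) ((2 * Real.pi)⁻¹ • κ) := by
    ext κ; exact symb_ft_eq d f κ
  rw [this]
  exact (FourierTransform.fourier f).continuous.comp (continuous_const_smul _)

lemma symb_kernel (d : ℕ) (m : SchwartzMap (Ed d) ℂ) (hm : m 0 = 0) :
    ∃ K : SchwartzMap (Ed d) ℂ,
      (∀ z, K z = (((2 * Real.pi) ^ (-(d : ℝ)) : ℝ) : ℂ) *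
        ∫ κ, Complex.exp (Complex.I * (⟪z, κ⟫ : ℂ)) * m κ) ∧ ∫ z, K z = 0 := by
  have h2 : (2 * Real.pi)⁻¹ ≠ 0 := by positivity
  let e : Ed d ≃L[ℝ] Ed d := ContinuousLinearEquiv.smulLeft (Units.mk0 _ h2)
  let K : SchwartzMap (Ed d) ℂ := (((2 * Real.pi) ^ (-(d : ℝ)) : ℝ) : ℂ) •
    SchwartzMap.compCLMOfContinuousLinearEquiv ℂ e (FourierTransformInv.fourierInv m)
  have hK : ∀ z, K z = (((2 * Real.pi) ^ (-(d : ℝ)) : ℝ) : ℂ) *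
      (FourierTransformInv.fourierInv m) ((2 * Real.pi)⁻¹ • z) := fun z => rfl
  refine ⟨K, fun z => ?_, ?_⟩
  · rw [hK, symb_exp_eq]
  · simp_rw [hK]
    rw [integral_const_mul, Measure.integral_comp_smul volume (FourierTransformInv.fourierInv m)]
    have : ∫ x, (FourierTransformInv.fourierInv m) x = 0 := by
      have h := congrArg (fun g : SchwartzMap (Ed d) ℂ => g 0)
        (FourierTransform.fourier_fourierInv_eq (F := SchwartzMap (Ed d) ℂ) m)
      simp only [SchwartzMap.fourier_coe, Real.fourier_eq', hm] at h
      simpa using h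
    rw [this]
    simp

lemma symb_radial (d : ℕ) (hd : 1 ≤ d) (s : ℝ) (hs0 : 0 < s) (hs1 : s < 1) :
    ∃ C : ℝ, 0 ≤ C ∧ ∀ H : ℝ, 0 < H →
      ∫⁻ z : Ed d, ENNReal.ofReal (‖z‖ ^ (s - d) * min 1 (H / ‖z‖)) =
        ENNReal.ofReal (C * H ^ s) := by
  have : Nonempty (Fin d) := ⟨⟨0, hd⟩⟩
  have : Nontrivial (Ed d) := inferInstance
  set G : ℝ → ℝ := fun y => y ^ (s - 1) * min 1 (1 / y) with hG
  have hGi : IntegrableOn G (Ioi 0) := by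
    rw [← Ioc_union_Ioi_eq_Ioi zero_le_one]
    refine IntegrableOn.union ?_ ?_
    · have : IntegrableOn (fun y : ℝ => y ^ (s - 1)) (Ioc 0 1) := by
        rw [← intervalIntegrable_iff_integrableOn_Ioc_of_le zero_le_one]
        exact intervalIntegral.intervalIntegrable_rpow' (by linarith)
      refine this.congr_fun (fun y hy => ?_) measurableSet_Ioc
      have : 1 ≤ 1 / y := by rw [le_div_iff₀ hy.1]; linarith [hy.2]
      simp only [hG, min_eq_left this, mul_one]
    · have : IntegrableOn (fun y : ℝ => y ^ (s - 2)) (Ioi 1) :=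
        integrableOn_Ioi_rpow_of_lt (by linarith) one_pos
      refine this.congr_fun (fun y hy => ?_) measurableSet_Ioi
      have hy : 1 < y := hy
      have h0 : 0 < y := by linarith
      have : 1 / y ≤ 1 := by rw [div_le_iff₀ h0]; linarith
      simp only [hG, min_eq_right this]
      rw [show s - 2 = (s - 1) - 1 by ring, Real.rpow_sub_one h0.ne' (s-1)]
      ring
  have hG0 : ∀ y ∈ Ioi (0:ℝ), 0 ≤ G y := fun y hy => by
    have : 0 < y := hy
    simp only [hG]; positivity
  set c := ∫ y in Ioi (0:ℝ), G y with hc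
  have hc0 : 0 ≤ c := setIntegral_nonneg measurableSet_Ioi hG0
  refine ⟨d * (volume.real (Metric.ball (0 : Ed d) 1) * c), by positivity, fun H hH => ?_⟩
  set F : ℝ → ℝ := fun y => y ^ (s - d) * min 1 (H / y) with hF
  have hFG : ∀ y ∈ Ioi (0:ℝ), H ^ (s-1) * G (y * H⁻¹) = y ^ (Module.finrank ℝ (Ed d) - 1) • F y := by
    intro y hy
    have hy : 0 < y := hy
    simp only [hG, hF, finrank_euclideanSpace, Fintype.card_fin, smul_eq_mul]
    rw [Real.mul_rpow hy.le (by positivity), Real.inv_rpow hH.le]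
    have : 1 / (y * H⁻¹) = H / y := by field_simp
    rw [this]
    have h3 : y ^ (d - 1) * y ^ (s - d) = y ^ (s - 1) := by
      rw [← Real.rpow_natCast, ← Real.rpow_add hy]
      congr 1
      push_cast [Nat.cast_sub hd]
      ring
    rw [← mul_assoc (y ^ (d - 1)), h3]
    have : H ^ (s-1) ≠ 0 := by positivity
    field_simp
  have hFi : IntegrableOn (fun y => y ^ (Module.finrank ℝ (Ed d) - 1) • F y) (Ioi 0) := by
    refine IntegrableOn.congr_fun ?_ hFG measurableSet_Ioi
    refine Integrable.const_mul ?_ _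
    have := (integrableOn_Ioi_comp_mul_right_iff G 0 (a := H⁻¹) (by positivity)).2 (by simpa using hGi)
    exact this
  have h1 := (integrable_fun_norm_addHaar (volume : Measure (Ed d)) (f := F)).2 hFi
  change ∫⁻ z : Ed d, ENNReal.ofReal (F ‖z‖) = _
  rw [← ofReal_integral_eq_lintegral_ofReal h1]
  · rw [integral_fun_norm_addHaar (volume : Measure (Ed d)) F, ← setIntegral_congr_fun measurableSet_Ioi hFG,
      integral_const_mul, integral_comp_mul_right_Ioi G 0 (by positivity : 0 < H⁻¹)]
    simp only [finrank_euclideanSpace, Fintype.card_fin, smul_eq_mul, nsmul_eq_mul, zero_mul, inv_inv, ← hc]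
    rw [Real.rpow_sub_one hH.ne']
    congr 1
    field_simp
  · refine Filter.Eventually.of_forall fun z => ?_
    simp only [hF, Pi.zero_apply]
    positivity

lemma symb_conv (d : ℕ) (m K f : SchwartzMap (Ed d) ℂ)
    (hK : ∀ z, K z = (((2 * Real.pi) ^ (-(d : ℝ)) : ℝ) : ℂ) *
        ∫ κ, Complex.exp (Complex.I * (⟪z, κ⟫ : ℂ)) * m κ) (t : ℝ) (ht : 0 < t) (x : Ed d) :
    (((2 * Real.pi) ^ (-(d : ℝ)) : ℝ) : ℂ) *
      ∫ κ, Complex.exp (Complex.I * (⟪x, κ⟫ : ℂ)) * m (t • κ) * ftransform d f κ =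
    ∫ z, (((t ^ d)⁻¹ : ℝ) : ℂ) * K (-(t⁻¹ • z)) * f (x + z) := by
  have hker : ∀ w : Ed d, (((2 * Real.pi) ^ (-(d : ℝ)) : ℝ) : ℂ) *
      ∫ κ, Complex.exp (Complex.I * (⟪w, κ⟫ : ℂ)) * m (t • κ) =
      (((t ^ d)⁻¹ : ℝ) : ℂ) * K (t⁻¹ • w) := by
    intro w
    have h := Measure.integral_comp_smul (volume : Measure (Ed d))
      (fun κ => Complex.exp (Complex.I * (⟪t⁻¹ • w, κ⟫ : ℂ)) * m κ) t
    simp only [inner_smul_left, inner_smul_right, finrank_euclideanSpace, Fintype.card_fin] at h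
    have e : ∀ κ : Ed d, t * ((starRingEnd ℝ) t⁻¹ * ⟪w, κ⟫) = ⟪w, κ⟫ := by
      intro κ
      simp only [RCLike.conj_to_real]
      field_simp
    simp only [e] at h
    rw [h, hK, abs_of_pos (by positivity)]
    simp only [inner_smul_left, Complex.real_smul]
    ring
  have hint : Integrable (Function.uncurry fun (κ y : Ed d) =>
      Complex.exp (Complex.I * (⟪x - y, κ⟫ : ℂ)) * (m (t • κ) * f y)) (volume.prod volume) := by
    have h1 : Integrable (fun κ : Ed d => m (t • κ)) := m.integrable.comp_smul ht.ne'
    have h2 := h1.mul_prod (f.integrable (μ := volume))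
    refine h2.mono ?_ (Filter.Eventually.of_forall fun q => ?_)
    · have := m.continuous
      have := f.continuous
      apply Continuous.aestronglyMeasurable
      simp only [Function.uncurry_def]
      fun_prop
    · rw [Function.uncurry_def, norm_mul, mul_comm Complex.I, Complex.norm_exp_ofReal_mul_I, one_mul]
  have h1 : ∀ κ : Ed d, Complex.exp (Complex.I * (⟪x, κ⟫ : ℂ)) * m (t • κ) * ftransform d f κ =
      ∫ y, Complex.exp (Complex.I * (⟪x - y, κ⟫ : ℂ)) * (m (t • κ) * f y) := by
    intro κ
    rw [ftransform, ← integral_const_mul]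
    congr 1
    ext y
    rw [inner_sub_left]
    push_cast
    rw [mul_sub, sub_eq_add_neg, Complex.exp_add]
    ring
  simp_rw [h1]
  rw [integral_integral_swap hint, ← integral_const_mul, ← integral_add_left_eq_self _ x]
  congr 1
  ext z
  have h2 := hker (-z)
  rw [smul_neg] at h2
  rw [← h2, mul_assoc, ← integral_mul_const]
  congr 2
  ext κ
  rw [show x - (x + z) = -z by abel]
  ring

/-- The Littlewood-Paley piece. -/
noncomputable def symbPiece (d : ℕ) (K f : SchwartzMap (Ed d) ℂ) (t : ℝ) (x : Ed d) : ℂ :=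
  ∫ z, (((t ^ d)⁻¹ : ℝ) : ℂ) * K (-(t⁻¹ • z)) * f (x + z)

lemma symb_rep (d : ℕ) (hd : 1 ≤ d) (a : Ed d → ℂ) (m K f : SchwartzMap (Ed d) ℂ)
    (hK : ∀ z, K z = (((2 * Real.pi) ^ (-(d : ℝ)) : ℝ) : ℂ) *
        ∫ κ, Complex.exp (Complex.I * (⟪z, κ⟫ : ℂ)) * m κ)
    (B : ℝ) (hB : ∀ κ : Ed d, κ ≠ 0 →
      ∫ t in Ioi (0:ℝ), m (t • κ) * ((t⁻¹ : ℝ) : ℂ) = a κ ∧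
      ∫⁻ t in Ioi (0:ℝ), ‖m (t • κ) * ((t⁻¹ : ℝ) : ℂ)‖ₑ ≤ ENNReal.ofReal B) (x : Ed d) :
    symbOp d a f x = ∫ t in Ioi (0:ℝ), symbPiece d K f t x * ((t⁻¹ : ℝ) : ℂ) ∧
    IntegrableOn (fun t : ℝ => symbPiece d K f t x * ((t⁻¹ : ℝ) : ℂ)) (Ioi 0) := by
  have : Nonempty (Fin d) := ⟨⟨0, hd⟩⟩
  have : Nontrivial (Ed d) := inferInstance
  have hne : ∀ᵐ κ : Ed d, κ ≠ 0 := by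
    simp [ae_iff]
  set c : ℂ := (((2 * Real.pi) ^ (-(d : ℝ)) : ℝ) : ℂ) with hc
  set Φ : Ed d → ℝ → ℂ := fun κ t =>
    (c * Complex.exp (Complex.I * (⟪x, κ⟫ : ℂ)) * ftransform d f κ) * (m (t • κ) * ((t⁻¹ : ℝ) : ℂ)) with hΦ
  have hfm : Measurable (ftransform d f) := (symb_ft_continuous d f).measurable
  have hmeas : Measurable (Function.uncurry Φ) := by
    have h1 : Measurable fun q : Ed d × ℝ => m (q.2 • q.1) :=
      (m.continuous.comp (by fun_prop)).measurable
    have h2 : Measurable fun q : Ed d × ℝ => Complex.exp (Complex.I * (⟪x, q.1⟫ : ℂ)) :=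
      Continuous.measurable (by fun_prop)
    have h3 : Measurable fun q : Ed d × ℝ => ((q.2⁻¹ : ℝ) : ℂ) :=
      Complex.measurable_ofReal.comp measurable_snd.inv
    have h4 : Measurable fun q : Ed d × ℝ => ftransform d f q.1 := hfm.comp measurable_fst
    exact ((measurable_const.mul h2).mul h4).mul (h1.mul h3)
  have hint : Integrable (Function.uncurry Φ) (volume.prod (volume.restrict (Ioi 0))) := by
    refine ⟨hmeas.aestronglyMeasurable, ?_⟩
    rw [hasFiniteIntegral_iff_enorm, lintegral_prod _ hmeas.enorm.aemeasurable]
    have hle : ∀ᵐ κ : Ed d, ∫⁻ t in Ioi (0:ℝ), ‖Function.uncurry Φ (κ, t)‖ₑ ≤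
        ‖c‖ₑ * ‖ftransform d f κ‖ₑ * ENNReal.ofReal B := by
      filter_upwards [hne] with κ hκ
      simp only [hΦ, Function.uncurry_apply_pair]
      simp_rw [enorm_mul _ (m _ * _)]
      rw [lintegral_const_mul' _ _ enorm_ne_top]
      refine mul_le_mul' (le_of_eq ?_) (hB κ hκ).2
      rw [enorm_mul, enorm_mul]
      congr 1
      have : ‖Complex.exp (Complex.I * (⟪x, κ⟫ : ℂ))‖ₑ = 1 := by
        rw [← ofReal_norm, mul_comm, Complex.norm_exp_ofReal_mul_I, ENNReal.ofReal_one]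
      rw [this, mul_one]
    refine lt_of_le_of_lt (lintegral_mono_ae hle) ?_
    rw [lintegral_mul_const' _ _ ENNReal.ofReal_ne_top, lintegral_const_mul' _ _ enorm_ne_top]
    exact ENNReal.mul_lt_top (ENNReal.mul_lt_top enorm_lt_top (symb_ft_integrable d f).2) ENNReal.ofReal_lt_top
  have hpiece : ∀ t ∈ Ioi (0:ℝ), ∫ κ, Φ κ t = symbPiece d K f t x * ((t⁻¹ : ℝ) : ℂ) := by
    intro t ht
    rw [symbPiece, ← symb_conv d m K f hK t ht x, ← hc, ← integral_const_mul, ← integral_mul_const]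
    congr 1
    ext κ
    simp only [hΦ]
    ring
  constructor
  · rw [← setIntegral_congr_fun measurableSet_Ioi hpiece, ← integral_integral_swap hint, symbOp,
      ← hc, ← integral_const_mul]
    refine integral_congr_ae ?_
    filter_upwards [hne] with κ hκ
    simp only [hΦ]
    rw [integral_const_mul, (hB κ hκ).1]
    ring
  · have := hint.integral_prod_right
    exact IntegrableOn.congr_fun (f := fun t => ∫ κ, Φ κ t) this hpiece measurableSet_Ioi

lemma symb_cancel (d : ℕ) (f : SchwartzMap (Ed d) ℂ) (k : Ed d → ℂ) (hk : Integrable k)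
    (hk0 : ∫ z, k z = 0) (x : Ed d) :
    Integrable (fun z => k z * f (x + z)) ∧
    ‖∫ z, k z * f (x + z)‖ₑ ≤ ∫⁻ z, ‖k z‖ₑ * ‖f (x + z) - f x‖ₑ := by
  have hi : Integrable (fun z => k z * f (x + z)) := by
    refine hk.mul_bdd (c := SchwartzMap.seminorm ℝ 0 0 f) (Continuous.aestronglyMeasurable ?_)
      (Filter.Eventually.of_forall fun z => SchwartzMap.norm_le_seminorm ℝ f _)
    exact f.continuous.comp (by fun_prop)
  refine ⟨hi, ?_⟩
  have : ∫ z, k z * f (x + z) = ∫ z, k z * (f (x + z) - f x) := by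
    simp_rw [mul_sub]
    rw [integral_sub hi (hk.mul_const _), integral_mul_const, hk0]
    simp
  rw [this]
  refine (enorm_integral_le_lintegral_enorm _).trans (le_of_eq ?_)
  simp_rw [enorm_mul]

lemma symb_kbound (d : ℕ) (K : SchwartzMap (Ed d) ℂ) : ∃ A : ℝ, 0 ≤ A ∧
    (∀ u, ‖K u‖ ≤ A / (1 + ‖u‖) ^ (d + 2)) ∧
    (∀ u v, ‖v‖ ≤ 1 → ‖K (u + v) - K u‖ ≤ A * ‖v‖ / (1 + ‖u‖) ^ (d + 2)) := by
  set A := 2 ^ (d+2) * ((Finset.Iic ((d+2, 1) : ℕ × ℕ)).sup fun m => SchwartzMap.seminorm ℝ m.1 m.2) K with hA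
  have hA0 : 0 ≤ A := by positivity
  have h0 : ∀ u, ‖K u‖ ≤ A / (1 + ‖u‖) ^ (d + 2) := by
    intro u
    have := SchwartzMap.one_add_le_sup_seminorm_apply (𝕜 := ℝ) (m := (d+2, 1)) (k := d+2) (n := 0) le_rfl zero_le_one K u
    rw [norm_iteratedFDeriv_zero] at this
    rw [le_div_iff₀ (by positivity), mul_comm]
    exact this
  have h1 : ∀ u, ‖fderiv ℝ K u‖ ≤ A / (1 + ‖u‖) ^ (d + 2) := by
    intro u
    have := SchwartzMap.one_add_le_sup_seminorm_apply (𝕜 := ℝ) (m := (d+2, 1)) (k := d+2) (n := 1) le_rfl le_rfl K u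
    rw [norm_iteratedFDeriv_one] at this
    rw [le_div_iff₀ (by positivity), mul_comm]
    exact this
  refine ⟨2 ^ (d+2) * A, by positivity, fun u => (h0 u).trans ?_, fun u v hv => ?_⟩
  · gcongr
    exact le_mul_of_one_le_left hA0 (one_le_pow₀ one_le_two)
  · have hb : ∀ w ∈ Metric.closedBall u 1, ‖fderiv ℝ K w‖ ≤ 2 ^ (d+2) * A / (1 + ‖u‖) ^ (d+2) := by
      intro w hw
      refine (h1 w).trans ?_
      rw [div_le_div_iff₀ (by positivity) (by positivity)]
      have h3 : 1 + ‖u‖ ≤ 2 * (1 + ‖w‖) := by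
        have h4 : ‖u‖ ≤ ‖w‖ + ‖u - w‖ := by
          calc ‖u‖ = ‖w + (u - w)‖ := by congr 1; abel
            _ ≤ _ := norm_add_le _ _
        rw [Metric.mem_closedBall, dist_comm, dist_eq_norm] at hw
        linarith [norm_nonneg w]
      calc A * (1 + ‖u‖) ^ (d+2) ≤ A * (2 * (1 + ‖w‖)) ^ (d+2) := by gcongr
        _ = _ := by rw [mul_pow]; ring
    have := (convex_closedBall u 1).norm_image_sub_le_of_norm_fderiv_le (𝕜 := ℝ)
      (fun w _ => K.differentiableAt) hb (Metric.mem_closedBall_self zero_le_one)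
      (y := u + v) (by simpa [Metric.mem_closedBall, dist_eq_norm] using hv)
    refine this.trans (le_of_eq ?_)
    rw [add_sub_cancel_left]
    ring

lemma symb_W (d : ℕ) (A t : ℝ) (ht : 0 < t) (z : Ed d) :
    (t ^ d)⁻¹ * (A / (1 + ‖-(t⁻¹ • z)‖) ^ (d + 2)) * t⁻¹ = A * (t / (t + ‖z‖) ^ (d + 2)) := by
  rw [norm_neg, norm_smul, Real.norm_of_nonneg (by positivity)]
  have : 1 + t⁻¹ * ‖z‖ = (t + ‖z‖) / t := by field_simp
  rw [this, div_pow]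
  have : 0 < t + ‖z‖ := by positivity
  field_simp
  ring

lemma symb_diff (d : ℕ) (K : SchwartzMap (Ed d) ℂ) (hK0 : ∫ z, K z = 0) : ∃ A : ℝ, 0 ≤ A ∧
    ∀ (f : SchwartzMap (Ed d) ℂ) (t : ℝ) (_ : 0 < t) (x h : Ed d),
      ‖(symbPiece d K f t (x + h) - symbPiece d K f t x) * ((t⁻¹ : ℝ) : ℂ)‖ₑ ≤
        ∫⁻ z, ENNReal.ofReal (A * (min 1 (‖h‖ / t) * (t / (t + ‖z‖) ^ (d + 2)))) *
          (‖f (x + z) - f x‖ₑ + ‖f (x + h + z) - f (x + h)‖ₑ) := by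
  obtain ⟨A, hA, hb, hl⟩ := symb_kbound d K
  refine ⟨A, hA, fun f t ht x h => ?_⟩
  set k : Ed d → ℂ := fun z => (((t ^ d)⁻¹ : ℝ) : ℂ) * K (-(t⁻¹ • z)) with hk
  have hki : Integrable k := by
    have := (K.integrable (μ := volume)).comp_smul (R := -t⁻¹) (by simp [ht.ne'])
    simp only [neg_smul] at this
    exact this.const_mul _
  have hk0 : ∫ z, k z = 0 := by
    simp only [hk]
    rw [integral_const_mul]
    have := Measure.integral_comp_smul (volume : Measure (Ed d)) K (-t⁻¹)
    simp only [neg_smul] at this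
    rw [this, hK0]
    simp
  have htinv : ‖((t⁻¹ : ℝ) : ℂ)‖ₑ = ENNReal.ofReal t⁻¹ := by
    rw [← ofReal_norm, Complex.norm_real, Real.norm_of_nonneg (by positivity)]
  have hkn : ∀ z, ‖k z‖ₑ * ENNReal.ofReal t⁻¹ ≤ ENNReal.ofReal (A * (t / (t + ‖z‖) ^ (d + 2))) := by
    intro z
    rw [← ofReal_norm, ← ENNReal.ofReal_mul (norm_nonneg _)]
    apply ENNReal.ofReal_le_ofReal
    rw [← symb_W d A t ht z]
    simp only [hk]
    rw [norm_mul, Complex.norm_real, Real.norm_of_nonneg (by positivity)]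
    gcongr
    exact hb _
  have hA1 : ∀ y, ‖symbPiece d K f t y‖ₑ * ENNReal.ofReal t⁻¹ ≤
      ∫⁻ z, ENNReal.ofReal (A * (t / (t + ‖z‖) ^ (d + 2))) * ‖f (y + z) - f y‖ₑ := by
    intro y
    refine (mul_le_mul_left (symb_cancel d f k hki hk0 y).2 _).trans ?_
    rw [← lintegral_mul_const' _ _ ENNReal.ofReal_ne_top]
    refine lintegral_mono fun z => ?_
    rw [mul_right_comm]
    exact mul_le_mul_left (hkn z) _
  rw [enorm_mul, htinv]
  rcases le_or_gt t ‖h‖ with hth | hth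
  · have hmin : min 1 (‖h‖ / t) = 1 := min_eq_left (by rwa [le_div_iff₀ ht, one_mul])
    rw [hmin]
    simp_rw [one_mul, mul_add]
    have hmeas : Measurable fun z => ENNReal.ofReal (A * (t / (t + ‖z‖) ^ (d + 2))) * ‖f (x + z) - f x‖ₑ := by
      have := f.continuous.measurable
      fun_prop
    rw [lintegral_add_left hmeas]
    calc _ ≤ (‖symbPiece d K f t (x + h)‖ₑ + ‖symbPiece d K f t x‖ₑ) * ENNReal.ofReal t⁻¹ := by
            gcongr
            exact enorm_sub_le
      _ ≤ _ := by
          rw [add_mul, add_comm]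
          exact add_le_add (hA1 x) (hA1 (x + h))
  · have hmin : min 1 (‖h‖ / t) = ‖h‖ / t := min_eq_right (by rw [div_le_iff₀ ht]; linarith)
    rw [hmin]
    have hkhi : Integrable (fun z => k (z - h)) := hki.comp_sub_right h
    have hkh0 : ∫ z, k (z - h) = 0 := by rw [integral_sub_right_eq_self k h, hk0]
    have heq : symbPiece d K f t (x + h) - symbPiece d K f t x =
        ∫ z, (k (z - h) - k z) * f (x + z) := by
      have e1 : symbPiece d K f t (x + h) = ∫ z, k (z - h) * f (x + z) := by
        rw [symbPiece, ← integral_sub_right_eq_self _ h]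
        congr 1
        ext z
        rw [show x + h + (z - h) = x + z by abel]
      have e2 : symbPiece d K f t x = ∫ z, k z * f (x + z) := rfl
      rw [e1, e2, ← integral_sub (symb_cancel d f _ hkhi hkh0 x).1 (symb_cancel d f k hki hk0 x).1]
      simp_rw [sub_mul]
    rw [heq]
    have hc := (symb_cancel d f (fun z => k (z - h) - k z) (hkhi.sub hki)
      (by rw [integral_sub hkhi hki, hkh0, hk0, sub_zero]) x).2
    refine (mul_le_mul_left hc _).trans ?_
    rw [← lintegral_mul_const' _ _ ENNReal.ofReal_ne_top]
    refine lintegral_mono fun z => ?_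
    rw [mul_right_comm]
    refine mul_le_mul' ?_ le_self_add
    rw [← ofReal_norm, ← ENNReal.ofReal_mul (norm_nonneg _)]
    apply ENNReal.ofReal_le_ofReal
    have hW := symb_W d (A * (‖h‖ / t)) t ht z
    rw [← mul_assoc, ← hW]
    simp only [hk]
    rw [← mul_sub, norm_mul, Complex.norm_real, Real.norm_of_nonneg (by positivity)]
    have hv : ‖t⁻¹ • h‖ = ‖h‖ / t := by
      rw [norm_smul, Real.norm_of_nonneg (by positivity)]; field_simp
    have := hl (-(t⁻¹ • z)) (t⁻¹ • h) (by rw [hv, div_le_one ht]; exact hth.le)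
    rw [hv] at this
    rw [show -(t⁻¹ • (z - h)) = -(t⁻¹ • z) + t⁻¹ • h by rw [smul_sub]; abel]
    gcongr

lemma symb_tbase (n : ℕ) (Z : ℝ) (hZ : 0 < Z) :
    ∫⁻ t in Ioi (0:ℝ), ENNReal.ofReal (((t + Z) ^ (n + 2))⁻¹) ≤ ENNReal.ofReal ((Z ^ (n + 1))⁻¹) := by
  have e : ∀ t ∈ Ioi (0:ℝ), ENNReal.ofReal (((t + Z) ^ (n + 2))⁻¹) =
      ENNReal.ofReal ((t + Z) ^ (-((n:ℝ) + 2))) := by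
    intro t ht
    have ht : 0 < t := ht
    rw [Real.rpow_neg (by positivity)]
    norm_cast
  rw [setLIntegral_congr_fun measurableSet_Ioi e, ← ofReal_integral_eq_lintegral_ofReal]
  · apply ENNReal.ofReal_le_ofReal
    have h1 := (measurePreserving_add_right (volume : Measure ℝ) Z).setIntegral_preimage_emb
      (measurableEmbedding_addRight Z) (fun t : ℝ => t ^ (-((n:ℝ) + 2))) (Ioi Z)
    have h2 : (fun x : ℝ => x + Z) ⁻¹' Ioi Z = Ioi 0 := by
      ext x; simp
    rw [h2] at h1
    rw [h1, integral_Ioi_rpow_of_lt (by linarith [(Nat.cast_nonneg n : (0:ℝ) ≤ n)]) hZ]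
    have h3 : -((n:ℝ) + 2) + 1 = -((n + 1 : ℕ) : ℝ) := by push_cast; ring
    rw [h3, Real.rpow_neg hZ.le, Real.rpow_natCast, neg_div_neg_eq]
    refine div_le_self (by positivity) ?_
    push_cast
    linarith [(Nat.cast_nonneg n : (0:ℝ) ≤ n)]
  · exact integrableOn_add_rpow_Ioi_of_lt (by linarith [(Nat.cast_nonneg n : (0:ℝ) ≤ n)]) (by linarith)
  · refine (ae_restrict_iff' measurableSet_Ioi).2 (Filter.Eventually.of_forall fun t ht => ?_)
    have ht : 0 < t := ht
    simp only [Pi.zero_apply]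
    positivity

lemma symb_tint (d : ℕ) (hd : 1 ≤ d) (A : ℝ) (hA : 0 ≤ A) (Z H : ℝ) (hZ : 0 < Z) (hH : 0 ≤ H) :
    ∫⁻ t in Ioi (0:ℝ), ENNReal.ofReal (A * (min 1 (H / t) * (t / (t + Z) ^ (d + 2)))) ≤
      ENNReal.ofReal A * ENNReal.ofReal (Z ^ (-(d : ℝ)) * min 1 (H / Z)) := by
  obtain ⟨n, rfl⟩ : ∃ n, d = n + 1 := ⟨d - 1, by omega⟩
  have hZd : Z ^ (-((n + 1 : ℕ) : ℝ)) = (Z ^ (n + 1))⁻¹ := by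
    rw [Real.rpow_neg hZ.le, Real.rpow_natCast]
  rw [hZd]
  simp_rw [ENNReal.ofReal_mul hA]
  rw [lintegral_const_mul' _ _ ENNReal.ofReal_ne_top]
  refine mul_le_mul_right ?_ _
  rw [mul_min_of_nonneg _ _ (by positivity), ENNReal.ofReal_min]
  refine le_min ?_ ?_
  · rw [mul_one]
    refine le_trans (setLIntegral_mono' measurableSet_Ioi fun t ht => ?_) (symb_tbase n Z hZ)
    have ht : 0 < t := ht
    apply ENNReal.ofReal_le_ofReal
    calc min 1 (H / t) * (t / (t + Z) ^ (n + 1 + 2)) ≤ 1 * (t / (t + Z) ^ (n + 1 + 2)) := by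
          gcongr
          exact min_le_left _ _
      _ ≤ (t + Z) / (t + Z) ^ (n + 1 + 2) := by rw [one_mul]; gcongr; linarith
      _ = _ := by
          have : 0 < t + Z := by positivity
          field_simp
          ring
  · have : (Z ^ (n + 1))⁻¹ * (H / Z) = H * (Z ^ (n + 1 + 1))⁻¹ := by field_simp; ring
    rw [this, ENNReal.ofReal_mul hH]
    refine le_trans ?_ (mul_le_mul_right (symb_tbase (n + 1) Z hZ) _)
    rw [← lintegral_const_mul' _ _ ENNReal.ofReal_ne_top]
    refine setLIntegral_mono' measurableSet_Ioi fun t ht => ?_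
    have ht : 0 < t := ht
    rw [← ENNReal.ofReal_mul hH]
    apply ENNReal.ofReal_le_ofReal
    calc min 1 (H / t) * (t / (t + Z) ^ (n + 1 + 2)) ≤ (H / t) * (t / (t + Z) ^ (n + 1 + 2)) := by
          gcongr
          exact min_le_right _ _
      _ = _ := by
          have : 0 < t + Z := by positivity
          field_simp

/-- The comparison kernel. -/
noncomputable def symbG (d : ℕ) (h z : Ed d) : ℝ≥0∞ :=
  ENNReal.ofReal (‖z‖ ^ (-(d : ℝ)) * min 1 (‖h‖ / ‖z‖))

lemma symbG_meas (d : ℕ) : Measurable fun q : Ed d × Ed d => symbG d q.1 q.2 := by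
  unfold symbG
  fun_prop

lemma symb_ae_ne (d : ℕ) (hd : 1 ≤ d) : ∀ᵐ κ : Ed d, κ ≠ 0 := by
  have : Nonempty (Fin d) := ⟨⟨0, hd⟩⟩
  have : Nontrivial (Ed d) := inferInstance
  simp [ae_iff]

lemma symb_pointwise (d : ℕ) (hd : 1 ≤ d) (a : Ed d → ℂ) (ha : IsSymbol0 d a) :
    ∃ A : ℝ, 0 ≤ A ∧ ∀ (f : SchwartzMap (Ed d) ℂ) (x h : Ed d),
      ‖symbOp d a f (x + h) - symbOp d a f x‖ₑ ≤ ENNReal.ofReal A *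
        ∫⁻ z, symbG d h z * (‖f (x + z) - f x‖ₑ + ‖f (x + h + z) - f (x + h)‖ₑ) := by
  obtain ⟨m, hm0, B, hB⟩ := symb_exists_m d a ha
  obtain ⟨K, hK, hK0⟩ := symb_kernel d m hm0
  obtain ⟨A, hA, hdiff⟩ := symb_diff d K hK0
  refine ⟨A, hA, fun f x h => ?_⟩
  have r1 := symb_rep d hd a m K f hK B hB (x + h)
  have r2 := symb_rep d hd a m K f hK B hB x
  rw [r1.1, r2.1, ← integral_sub r1.2 r2.2]
  simp_rw [← sub_mul]
  refine (enorm_integral_le_lintegral_enorm _).trans ?_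
  refine (setLIntegral_mono' measurableSet_Ioi fun t ht => hdiff f t ht x h).trans ?_
  rw [lintegral_lintegral_swap]
  · rw [← lintegral_const_mul' _ _ ENNReal.ofReal_ne_top]
    refine lintegral_mono_ae ?_
    filter_upwards [symb_ae_ne d hd] with z hz
    rw [lintegral_mul_const', ← mul_assoc]
    · refine mul_le_mul_left ?_ _
      exact symb_tint d hd A hA ‖z‖ ‖h‖ (norm_pos_iff.2 hz) (norm_nonneg _)
    · exact ENNReal.add_ne_top.2 ⟨enorm_ne_top, enorm_ne_top⟩
  · have := f.continuous.measurable
    apply Measurable.aemeasurable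
    simp only [Function.uncurry_def]
    fun_prop

/-- The weight. -/
noncomputable def symbw (d : ℕ) (r p : ℝ) (h : Ed d) : ℝ≥0∞ :=
  ENNReal.ofReal (‖h‖ ^ (-(r * p + d)))

lemma symbw_meas (d : ℕ) (r p : ℝ) : Measurable (symbw d r p) := by
  unfold symbw
  fun_prop

lemma symb_schur (d : ℕ) (hd : 1 ≤ d) (r p : ℝ) (hr0 : 0 < r) (hr1 : r < 1) (hp : 2 ≤ p) :
    ∃ C : ℝ, 0 ≤ C ∧ ∀ D : Ed d → ℝ≥0∞, Measurable D →
      ∫⁻ h, (∫⁻ z, symbG d h z * D z) ^ p * symbw d r p h ≤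
        ENNReal.ofReal C * ∫⁻ z, D z ^ p * symbw d r p z := by
  obtain ⟨C₁, hC₁, h₁⟩ := symb_radial d hd r hr0 hr1
  obtain ⟨C₂, hC₂, h₂⟩ := symb_radial d hd (1 - r) (by linarith) (by linarith)
  refine ⟨C₁ ^ (p - 1) * C₂, by positivity, fun D hD => ?_⟩
  have hp0 : 0 < p := by linarith
  have hpq : p.HolderConjugate (Real.conjExponent p) := Real.HolderConjugate.conjExponent (by linarith)
  set q := Real.conjExponent p with hq
  have hq0 : 0 < q := hpq.symm.pos
  have hqv : q = p / (p - 1) := rfl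
  have hp1 : p - 1 ≠ 0 := by linarith
  have hG : ∀ h, Measurable (symbG d h) := fun h => by
    unfold symbG; fun_prop
  -- Hölder step
  have hold : ∀ h : Ed d, h ≠ 0 → (∫⁻ z, symbG d h z * D z) ^ p ≤
      ENNReal.ofReal ((C₁ * ‖h‖ ^ r) ^ (p - 1)) *
        ∫⁻ z, symbG d h z * (D z ^ p * ENNReal.ofReal (‖z‖ ^ (-(r * (p - 1))))) := by
    intro h hh
    have hhn : 0 < ‖h‖ := norm_pos_iff.2 hh
    set F₁ : Ed d → ℝ≥0∞ := fun z =>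
      (symbG d h z * (D z ^ p * ENNReal.ofReal (‖z‖ ^ (-(r * (p - 1)))))) ^ (1 / p) with hF₁
    set F₂ : Ed d → ℝ≥0∞ := fun z =>
      (symbG d h z * ENNReal.ofReal (‖z‖ ^ r)) ^ (1 / q) with hF₂
    have hF₁m : Measurable F₁ := by
      have := hG h
      simp only [hF₁]; fun_prop
    have hF₂m : Measurable F₂ := by
      have := hG h
      simp only [hF₂]; fun_prop
    have hprod : ∫⁻ z, symbG d h z * D z = ∫⁻ z, (F₁ * F₂) z := by
      refine lintegral_congr_ae ?_
      filter_upwards [symb_ae_ne d hd] with z hz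
      have hzn : 0 < ‖z‖ := norm_pos_iff.2 hz
      simp only [Pi.mul_apply, hF₁, hF₂]
      rw [ENNReal.mul_rpow_of_nonneg _ _ (by positivity), ENNReal.mul_rpow_of_nonneg _ _ (by positivity),
        ENNReal.mul_rpow_of_nonneg _ _ (by positivity), ← ENNReal.rpow_mul,
        mul_one_div_cancel hp0.ne', ENNReal.rpow_one,
        ENNReal.ofReal_rpow_of_pos (by positivity), ENNReal.ofReal_rpow_of_pos (by positivity),
        ← Real.rpow_mul hzn.le, ← Real.rpow_mul hzn.le]
      have e1 : symbG d h z ^ (1 / p) * symbG d h z ^ (1 / q) = symbG d h z := by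
        rw [← ENNReal.rpow_add_of_nonneg _ _ (by positivity) (by positivity), one_div, one_div,
          hpq.inv_add_inv_eq_one, ENNReal.rpow_one]
      have e2 : ENNReal.ofReal (‖z‖ ^ (-(r * (p - 1)) * (1 / p))) *
          ENNReal.ofReal (‖z‖ ^ (r * (1 / q))) = 1 := by
        rw [← ENNReal.ofReal_mul (by positivity), ← Real.rpow_add hzn]
        have : -(r * (p - 1)) * (1 / p) + r * (1 / q) = 0 := by
          rw [hqv]; field_simp; ring
        rw [this, Real.rpow_zero, ENNReal.ofReal_one]
      calc symbG d h z * D z = (symbG d h z ^ (1 / p) * symbG d h z ^ (1 / q)) * D z * 1 := by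
            rw [e1, mul_one]
        _ = _ := by rw [← e2]; ring
    have hH := ENNReal.lintegral_mul_le_Lp_mul_Lq volume hpq hF₁m.aemeasurable hF₂m.aemeasurable
    have hI₁ : ∀ z, F₁ z ^ p = symbG d h z * (D z ^ p * ENNReal.ofReal (‖z‖ ^ (-(r * (p - 1))))) := by
      intro z
      simp only [hF₁]
      rw [← ENNReal.rpow_mul, one_div_mul_cancel hp0.ne', ENNReal.rpow_one]
    have hI₂ : ∫⁻ z, F₂ z ^ q = ENNReal.ofReal (C₁ * ‖h‖ ^ r) := by
      rw [← h₁ ‖h‖ hhn]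
      refine lintegral_congr_ae ?_
      filter_upwards [symb_ae_ne d hd] with z hz
      have hzn : 0 < ‖z‖ := norm_pos_iff.2 hz
      simp only [hF₂]
      rw [← ENNReal.rpow_mul, one_div_mul_cancel hq0.ne', ENNReal.rpow_one, symbG,
        ← ENNReal.ofReal_mul (by positivity)]
      congr 1
      rw [mul_right_comm, ← Real.rpow_add hzn]
      congr 2
      ring
    simp_rw [hI₁] at hH
    rw [hprod]
    refine (ENNReal.rpow_le_rpow hH hp0.le).trans (le_of_eq ?_)
    rw [hI₂, ENNReal.mul_rpow_of_nonneg _ _ hp0.le, ← ENNReal.rpow_mul, one_div_mul_cancel hp0.ne',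
      ENNReal.rpow_one, ← ENNReal.rpow_mul, mul_comm]
    congr 1
    rw [show 1 / q * p = p - 1 by rw [hqv]; field_simp,
      ENNReal.ofReal_rpow_of_nonneg (by positivity) (by linarith)]
  -- integrate in h
  set V : Ed d → ℝ≥0∞ := fun h => ENNReal.ofReal ((C₁ * ‖h‖ ^ r) ^ (p - 1)) * symbw d r p h with hV
  have hVm : Measurable V := by
    have := symbw_meas d r p
    simp only [hV]; fun_prop
  set Y : Ed d → ℝ≥0∞ := fun z => D z ^ p * ENNReal.ofReal (‖z‖ ^ (-(r * (p - 1)))) with hY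
  have hYm : Measurable Y := by
    simp only [hY]; fun_prop
  have step1 : ∫⁻ h, (∫⁻ z, symbG d h z * D z) ^ p * symbw d r p h ≤
      ∫⁻ h, ∫⁻ z, V h * (symbG d h z * Y z) := by
    refine lintegral_mono_ae ?_
    filter_upwards [symb_ae_ne d hd] with h hh
    rw [lintegral_const_mul (f := fun z => symbG d h z * Y z) _ ((hG h).mul hYm)]
    refine (mul_le_mul_left (hold h hh) _).trans (le_of_eq ?_)
    simp only [hV]
    ring
  refine step1.trans ?_
  rw [lintegral_lintegral_swap]
  swap
  · have h1 := symbG_meas d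
    exact ((hVm.comp measurable_fst).mul (h1.mul (hYm.comp measurable_snd))).aemeasurable
  rw [← lintegral_const_mul' _ _ ENNReal.ofReal_ne_top]
  refine le_of_eq (lintegral_congr_ae ?_)
  filter_upwards [symb_ae_ne d hd] with z hz
  have hzn : 0 < ‖z‖ := norm_pos_iff.2 hz
  have hGz : Measurable fun h => symbG d h z := by unfold symbG; fun_prop
  have hsplit : ∫⁻ h, V h * (symbG d h z * Y z) = (∫⁻ h, V h * symbG d h z) * Y z := by
    rw [← lintegral_mul_const (f := fun h => V h * symbG d h z) _ (hVm.mul hGz)]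
    simp_rw [mul_assoc]
  rw [hsplit]
  have inner : ∫⁻ h, V h * symbG d h z =
      ENNReal.ofReal (C₁ ^ (p - 1) * C₂ * ‖z‖ ^ (-(d:ℝ) - r)) := by
    have : ∀ᵐ h : Ed d, V h * symbG d h z = ENNReal.ofReal (C₁ ^ (p - 1) * ‖z‖ ^ (-(d:ℝ) - 1)) *
        ENNReal.ofReal (‖h‖ ^ ((1 - r) - d) * min 1 (‖z‖ / ‖h‖)) := by
      filter_upwards [symb_ae_ne d hd] with h hh
      have hhn : 0 < ‖h‖ := norm_pos_iff.2 hh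
      simp only [hV, symbw, symbG]
      rw [← ENNReal.ofReal_mul (by positivity), ← ENNReal.ofReal_mul (by positivity),
        ← ENNReal.ofReal_mul (by positivity)]
      congr 1
      have hmin : min 1 (‖h‖ / ‖z‖) = ‖h‖ * ‖z‖⁻¹ * min 1 (‖z‖ / ‖h‖) := by
        rw [mul_min_of_nonneg _ _ (by positivity), min_comm]
        congr 1
        · ring
        · field_simp
      rw [hmin, Real.mul_rpow hC₁ (by positivity), ← Real.rpow_mul hhn.le]
      have e1 : ‖h‖ ^ (r * (p - 1)) * ‖h‖ ^ (-(r * p + d)) * ‖h‖ = ‖h‖ ^ ((1 - r) - d) := by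
        rw [← Real.rpow_add hhn, ← Real.rpow_add_one hhn.ne']
        congr 1; ring
      have e2 : ‖z‖ ^ (-(d:ℝ)) * ‖z‖⁻¹ = ‖z‖ ^ (-(d:ℝ) - 1) := by
        rw [Real.rpow_sub_one hzn.ne']; rfl
      rw [← e1, ← e2]
      ring
    rw [lintegral_congr_ae this, lintegral_const_mul' _ _ ENNReal.ofReal_ne_top, h₂ ‖z‖ hzn,
      ← ENNReal.ofReal_mul (by positivity)]
    congr 1
    have e3 : ‖z‖ ^ (-(d:ℝ) - 1) * ‖z‖ ^ (1 - r) = ‖z‖ ^ (-(d:ℝ) - r) := by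
      rw [← Real.rpow_add hzn]
      congr 1; ring
    rw [← e3]
    ring
  rw [inner]
  simp only [hY, symbw]
  rw [mul_left_comm, ← ENNReal.ofReal_mul (by positivity), mul_left_comm,
    ← ENNReal.ofReal_mul (by positivity)]
  congr 2
  rw [mul_assoc, ← Real.rpow_add hzn]
  congr 2
  ring

lemma symb_gag (d : ℕ) (hd : 1 ≤ d) (r p : ℝ) (u : Ed d → ℂ) :
    (∫⁻ x, ∫⁻ y, (‖u x - u y‖₊ : ℝ≥0∞) ^ p / (‖x - y‖₊ : ℝ≥0∞) ^ (r * p + d)) =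
      ∫⁻ x, ∫⁻ h, ‖u (x + h) - u x‖ₑ ^ p * symbw d r p h := by
  refine lintegral_congr fun x => ?_
  rw [← lintegral_add_left_eq_self _ x]
  refine lintegral_congr_ae ?_
  filter_upwards [symb_ae_ne d hd] with h hh
  have hhn : 0 < ‖h‖ := norm_pos_iff.2 hh
  have e1 : (‖x - (x + h)‖₊ : ℝ≥0∞) = ENNReal.ofReal ‖h‖ := by
    rw [show x - (x + h) = -h by abel, nnnorm_neg, ofReal_norm]; rfl
  have e2 : (‖u x - u (x + h)‖₊ : ℝ≥0∞) = ‖u (x + h) - u x‖ₑ := by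
    rw [← nnnorm_neg, neg_sub]; rfl
  rw [e1, e2, symbw, ENNReal.ofReal_rpow_of_pos hhn, div_eq_mul_inv,
    ← ENNReal.ofReal_inv_of_pos (by positivity), Real.rpow_neg hhn.le]

/-- Difference of `f`. -/
noncomputable def symbD (d : ℕ) (f : SchwartzMap (Ed d) ℂ) (x z : Ed d) : ℝ≥0∞ :=
  ‖f (x + z) - f x‖ₑ

lemma symbD_meas (d : ℕ) (f : SchwartzMap (Ed d) ℂ) :
    Measurable fun q : Ed d × Ed d => symbD d f q.1 q.2 := by
  have := f.continuous.measurable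
  unfold symbD
  fun_prop

lemma symbD_meas_right (d : ℕ) (f : SchwartzMap (Ed d) ℂ) (x : Ed d) :
    Measurable (symbD d f x) := by
  have := f.continuous.measurable
  unfold symbD
  fun_prop

/-- The averaged difference. -/
noncomputable def symbS (d : ℕ) (f : SchwartzMap (Ed d) ℂ) (x h : Ed d) : ℝ≥0∞ :=
  ∫⁻ z, symbG d h z * symbD d f x z

lemma symbS_meas (d : ℕ) (f : SchwartzMap (Ed d) ℂ) :
    Measurable fun q : Ed d × Ed d => symbS d f q.1 q.2 := by
  unfold symbS
  have h1 : Measurable fun q : (Ed d × Ed d) × Ed d => symbG d q.1.2 q.2 :=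
    (symbG_meas d).comp (f := fun q : (Ed d × Ed d) × Ed d => (q.1.2, q.2)) (by fun_prop)
  have h2 : Measurable fun q : (Ed d × Ed d) × Ed d => symbD d f q.1.1 q.2 :=
    (symbD_meas d f).comp (f := fun q : (Ed d × Ed d) × Ed d => (q.1.1, q.2)) (by fun_prop)
  exact (h1.mul h2).lintegral_prod_right'

/-- A zeroth-order homogeneous symbol `a ∈ S⁰_{ph}` defines an operator
`𝔞` bounded on the homogeneous Besov space `Ḃ^r_{p,p}`: for `0 < r < 1`, `2 ≤ p < ∞`,
`[𝔞[f]]_{r,p} ≤ C [f]_{r,p}` for every Schwartz `f`. -/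
theorem stmt4 (d : ℕ) (hd : 1 ≤ d) (r p : ℝ) (hr0 : 0 < r) (hr1 : r < 1) (hp : 2 ≤ p)
    (a : Ed d → ℂ) (ha : IsSymbol0 d a) :
    ∃ C : ℝ, 0 < C ∧ ∀ f : SchwartzMap (Ed d) ℂ,
      gagliardo d r p (symbOp d a ⇑f) ≤ ENNReal.ofReal C * gagliardo d r p ⇑f := by
  obtain ⟨A, hA, hpt⟩ := symb_pointwise d hd a ha
  obtain ⟨M, hM, hsch⟩ := symb_schur d hd r p hr0 hr1 hp
  have hp0 : 0 < p := by linarith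
  set L : ℝ := A ^ p * 2 ^ (p - 1) * (2 * M) with hL
  have hL0 : 0 ≤ L := by positivity
  refine ⟨L ^ (1 / p) + 1, by positivity, fun f => ?_⟩
  have hw := symbw_meas d r p
  have hSm := symbS_meas d f
  have hDx := symbD_meas_right d f
  have hSwm : Measurable fun q : Ed d × Ed d => symbS d f q.1 q.2 ^ p * symbw d r p q.2 :=
    (hSm.pow_const p).mul (hw.comp measurable_snd)
  have hSwm2 : Measurable fun q : Ed d × Ed d => symbS d f (q.1 + q.2) q.2 ^ p * symbw d r p q.2 :=
    hSwm.comp (f := fun q : Ed d × Ed d => (q.1 + q.2, q.2)) (by fun_prop)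
  set N : ℝ≥0∞ := ∫⁻ x, ∫⁻ h, symbD d f x h ^ p * symbw d r p h with hN
  have hfirst : ∫⁻ x, ∫⁻ h, symbS d f x h ^ p * symbw d r p h ≤ ENNReal.ofReal M * N := by
    rw [hN, ← lintegral_const_mul' _ _ ENNReal.ofReal_ne_top]
    exact lintegral_mono fun x => hsch (symbD d f x) (hDx x)
  have hsecond : ∫⁻ x, ∫⁻ h, symbS d f (x + h) h ^ p * symbw d r p h =
      ∫⁻ x, ∫⁻ h, symbS d f x h ^ p * symbw d r p h := by
    rw [lintegral_lintegral_swap hSwm2.aemeasurable, lintegral_lintegral_swap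
      (f := fun x h => symbS d f x h ^ p * symbw d r p h) hSwm.aemeasurable]
    refine lintegral_congr fun h => ?_
    exact lintegral_add_right_eq_self (fun x => symbS d f x h ^ p * symbw d r p h) h
  have hmain : ∫⁻ x, ∫⁻ h, ‖symbOp d a f (x + h) - symbOp d a f x‖ₑ ^ p * symbw d r p h ≤
      ENNReal.ofReal L * N := by
    have hb : ∀ x h, ‖symbOp d a f (x + h) - symbOp d a f x‖ₑ ^ p * symbw d r p h ≤
        ENNReal.ofReal (A ^ p * 2 ^ (p - 1)) *
          (symbS d f x h ^ p * symbw d r p h + symbS d f (x + h) h ^ p * symbw d r p h) := by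
      intro x h
      have h1 := hpt f x h
      have h2 : ∫⁻ z, symbG d h z * (‖f (x + z) - f x‖ₑ + ‖f (x + h + z) - f (x + h)‖ₑ) =
          symbS d f x h + symbS d f (x + h) h := by
        simp_rw [mul_add]
        have hG : Measurable (symbG d h) := by unfold symbG; fun_prop
        exact lintegral_add_left (f := fun z => symbG d h z * symbD d f x z) (hG.mul (hDx x)) _
      rw [h2] at h1
      calc _ ≤ (ENNReal.ofReal A * (symbS d f x h + symbS d f (x + h) h)) ^ p * symbw d r p h := by gcongr
        _ = ENNReal.ofReal (A ^ p) * (symbS d f x h + symbS d f (x + h) h) ^ p * symbw d r p h := by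
            rw [ENNReal.mul_rpow_of_nonneg _ _ hp0.le, ENNReal.ofReal_rpow_of_nonneg hA hp0.le]
        _ ≤ ENNReal.ofReal (A ^ p) * (2 ^ (p - 1) * (symbS d f x h ^ p + symbS d f (x + h) h ^ p)) * symbw d r p h := by
            gcongr
            exact ENNReal.rpow_add_le_mul_rpow_add_rpow _ _ (by linarith)
        _ = _ := by
            rw [ENNReal.ofReal_mul (by positivity), ← ENNReal.ofReal_rpow_of_nonneg (x := 2) (by norm_num) (by linarith),
              ENNReal.ofReal_ofNat]
            ring
    refine (lintegral_mono fun x => lintegral_mono fun h => hb x h).trans ?_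
    have hcalc : ∫⁻ x, ∫⁻ h, ENNReal.ofReal (A ^ p * 2 ^ (p - 1)) *
          (symbS d f x h ^ p * symbw d r p h + symbS d f (x + h) h ^ p * symbw d r p h) =
        ENNReal.ofReal (A ^ p * 2 ^ (p - 1)) * ((∫⁻ x, ∫⁻ h, symbS d f x h ^ p * symbw d r p h) +
          ∫⁻ x, ∫⁻ h, symbS d f (x + h) h ^ p * symbw d r p h) := by
      rw [← lintegral_add_left hSwm.lintegral_prod_right',
        ← lintegral_const_mul' _ _ ENNReal.ofReal_ne_top]
      refine lintegral_congr fun x => ?_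
      rw [lintegral_const_mul' _ _ ENNReal.ofReal_ne_top, lintegral_add_left]
      exact hSwm.comp (f := fun h : Ed d => (x, h)) (by fun_prop)
    rw [hcalc, hsecond, hL, ENNReal.ofReal_mul (q := 2 * M) (by positivity),
      mul_assoc (ENNReal.ofReal (A ^ p * 2 ^ (p - 1)))]
    refine mul_le_mul_right ?_ _
    rw [← two_mul, ENNReal.ofReal_mul (by norm_num), ENNReal.ofReal_ofNat, mul_assoc]
    exact mul_le_mul_right hfirst _
  have hfin := ENNReal.rpow_le_rpow hmain (by positivity : 0 ≤ 1 / p)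
  unfold gagliardo
  rw [symb_gag d hd r p, symb_gag d hd r p]
  refine hfin.trans ?_
  rw [ENNReal.mul_rpow_of_nonneg _ _ (by positivity), ENNReal.ofReal_rpow_of_nonneg hL0 (by positivity)]
  refine mul_le_mul_left ?_ _
  exact ENNReal.ofReal_le_ofReal (by linarith)
end

section
/- Let d ≥ 1, 0 < r < 1, and 2 ≤ p < ∞ with r > d/p, and let a be a symbol of class S⁰_ph on ℝ^d. Set γ₁ = (r − d/p)/(r + 1 + d(p−2)/(2p)). There exists a constant C, depending only on d, r, p and a, such that for every Schwartz function f on ℝ^d with [f]_{−1} := ((2π)^{−d} ∫_{ℝ^d} |κ|^{−2} |f̂(κ)|² dκ)^{1/2} < ∞ one has ‖𝔞[f]‖_{L^∞} ≤ C · [f]_{−1}^{γ₁} · [f]_{r,p}^{1−γ₁}. -/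
open MeasureTheory ENNReal
open scoped RealInnerProductSpace

open Filter Topology FourierTransform

lemma aux_lint_smul (d : ℕ) (t : ℝ) (ht : 0 < t) (F : Ed d → ℝ≥0∞) :
    ∫⁻ u, F (t • u) = ENNReal.ofReal (t ^ (-(d : ℝ))) * ∫⁻ u, F u := by
  have h := Measure.map_addHaar_smul (volume : Measure (Ed d)) ht.ne'
  have e : MeasurableEmbedding (fun u : Ed d => t • u) :=
    (Homeomorph.smulOfNeZero t ht.ne').measurableEmbedding
  have h2 := e.lintegral_map (μ := volume) F
  rw [← h2, h, lintegral_smul_measure]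
  simp only [finrank_euclideanSpace, Fintype.card_fin, smul_eq_mul]
  rw [abs_of_pos (by positivity), Real.rpow_neg ht.le, Real.rpow_natCast]

lemma aux_unit (d : ℕ) (r p q : ℝ) (hr0 : 0 < r) (hpq : p.HolderConjugate q)
    (k η g : Ed d → ℂ) (hk : Continuous k) (hη : Continuous η) (hg : Continuous g)
    (hki : Integrable k) (hk0 : ∫ u, k u = 0) (hη1 : ∫ u, η u = 1)
    (B : ℝ) (hB : ∀ u, ‖g u‖ ≤ B) :
    ‖∫ u, k u * g u‖ₑ ≤
      gagliardo d r p g *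
      ((∫⁻ u, (‖η u‖ₑ * (1 + ‖u‖ₑ) ^ (r + d / p)) ^ q) *
        ∫⁻ u, (‖k u‖ₑ * (1 + ‖u‖ₑ) ^ (r + d / p)) ^ q) ^ (1 / q) := by
  have hp0 : 0 < p := hpq.pos
  have hq0 : 0 < q := hpq.symm.pos
  set β : ℝ := r + d / p with hβ
  have hβ0 : 0 < β := by positivity
  have hkg : Integrable (fun u => k u * g u) := by
    refine (hki.mul_bdd (c := B) hg.aestronglyMeasurable ?_)
    exact Eventually.of_forall hB
  have h1 : ∀ z, ∫ u, k u * g u = ∫ y, k y * (g y - g z) := by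
    intro z
    simp_rw [mul_sub]
    rw [integral_sub hkg (hki.mul_const _), integral_mul_const, hk0]; simp
  have h2 : ∫ u, k u * g u = ∫ z, η z * ∫ y, k y * (g y - g z) := by
    simp_rw [← h1]
    rw [integral_mul_const, hη1, one_mul]
  have h3 : ‖∫ u, k u * g u‖ₑ ≤ ∫⁻ z, ∫⁻ y, ‖η z‖ₑ * (‖k y‖ₑ * ‖g z - g y‖ₑ) := by
    rw [h2]
    refine (enorm_integral_le_lintegral_enorm _).trans (lintegral_mono fun z => ?_)
    rw [enorm_mul, lintegral_const_mul' _ _ (by simp)]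
    gcongr
    refine (enorm_integral_le_lintegral_enorm _).trans (lintegral_mono fun y => ?_)
    rw [enorm_mul, ← enorm_neg (g y - g z), neg_sub]
  let F : Ed d × Ed d → ℝ≥0∞ := fun w => ‖g w.1 - g w.2‖ₑ / ‖w.1 - w.2‖ₑ ^ β
  let G : Ed d × Ed d → ℝ≥0∞ := fun w =>
    (‖η w.1‖ₑ * (1 + ‖w.1‖ₑ) ^ β) * (‖k w.2‖ₑ * (1 + ‖w.2‖ₑ) ^ β)
  have hF : Measurable F := by fun_prop
  have hG : Measurable G := by fun_prop
  have h4 : ∀ z y, ‖η z‖ₑ * (‖k y‖ₑ * ‖g z - g y‖ₑ) ≤ (F * G) (z, y) := by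
    intro z y
    by_cases hzy : z = y
    · subst hzy; simp
    have hn : ‖z - y‖ₑ ≠ 0 := by simpa [sub_eq_zero] using hzy
    have hn' : ‖z - y‖ₑ ≠ ⊤ := by simp
    have hA : ‖z - y‖ₑ ^ β ≤ (1 + ‖z‖ₑ) ^ β * (1 + ‖y‖ₑ) ^ β := by
      rw [← ENNReal.mul_rpow_of_nonneg _ _ hβ0.le]
      gcongr
      calc ‖z - y‖ₑ ≤ ‖z‖ₑ + ‖y‖ₑ := enorm_sub_le
        _ ≤ (‖z‖ₑ + ‖y‖ₑ) + (1 + ‖z‖ₑ * ‖y‖ₑ) := le_self_add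
        _ = _ := by ring
    have hE : ‖g z - g y‖ₑ = F (z, y) * ‖z - y‖ₑ ^ β := by
      simp only [F]
      rw [ENNReal.div_mul_cancel]
      · simp [ENNReal.rpow_eq_zero_iff, hn, hβ0.not_gt]
      · exact ENNReal.rpow_ne_top_of_nonneg hβ0.le hn'
    calc ‖η z‖ₑ * (‖k y‖ₑ * ‖g z - g y‖ₑ)
        = F (z, y) * (‖η z‖ₑ * ‖k y‖ₑ * ‖z - y‖ₑ ^ β) := by rw [hE]; ring
      _ ≤ F (z, y) * (‖η z‖ₑ * ‖k y‖ₑ * ((1 + ‖z‖ₑ) ^ β * (1 + ‖y‖ₑ) ^ β)) := by gcongr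
      _ = _ := by simp only [G, Pi.mul_apply]; ring
  have h5 : ∫⁻ z, ∫⁻ y, ‖η z‖ₑ * (‖k y‖ₑ * ‖g z - g y‖ₑ)
      ≤ ∫⁻ w, (F * G) w ∂((volume : Measure (Ed d)).prod volume) := by
    rw [lintegral_prod _ (hF.mul hG).aemeasurable]
    exact lintegral_mono fun z => lintegral_mono fun y => h4 z y
  refine h3.trans (h5.trans ((ENNReal.lintegral_mul_le_Lp_mul_Lq _ hpq hF.aemeasurable
    hG.aemeasurable).trans_eq ?_))
  congr 1
  · rw [lintegral_prod _ (hF.pow_const _).aemeasurable]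
    unfold gagliardo
    congr 1
    refine lintegral_congr fun z => lintegral_congr fun y => ?_
    simp only [F]
    rw [ENNReal.div_rpow_of_nonneg _ _ hp0.le, ← ENNReal.rpow_mul]
    have : β * p = r * p + d := by rw [hβ]; field_simp
    rw [this]; rfl
  · congr 1
    rw [lintegral_prod _ (hG.pow_const _).aemeasurable]
    simp only [G]
    rw [← lintegral_mul_const _ (by fun_prop)]
    refine lintegral_congr fun z => ?_
    rw [← lintegral_const_mul _ (by fun_prop)]
    refine lintegral_congr fun y => ?_
    rw [ENNReal.mul_rpow_of_nonneg _ _ hq0.le]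

lemma aux_weight (d : ℕ) (β q : ℝ) (hβ : β ≤ 2) (hq : 1 ≤ q) (g : SchwartzMap (Ed d) ℂ) :
    ∫⁻ u, (‖g u‖ₑ * (1 + ‖u‖ₑ) ^ β) ^ q ≠ ⊤ := by
  obtain ⟨C, hC⟩ : ∃ C : ℝ, ∀ u, (1 + ‖u‖) ^ (d + 3) * ‖g u‖ ≤ C := by
    refine ⟨2 ^ (d + 3) * (Finset.Iic (d + 3, 0)).sup
      (fun m => SchwartzMap.seminorm ℝ m.1 m.2) g, fun u => ?_⟩
    simpa using g.one_add_le_sup_seminorm_apply (𝕜 := ℝ) (m := (d+3, 0)) (k := d+3) (n := 0)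
      le_rfl le_rfl u
  have hC0 : 0 ≤ C := le_trans (by positivity) (hC 0)
  have key : ∀ u : Ed d, (‖g u‖ₑ * (1 + ‖u‖ₑ) ^ β) ^ q ≤
      ENNReal.ofReal (C ^ q) * ENNReal.ofReal ((1 + ‖u‖) ^ (-((d : ℝ) + 1))) := by
    intro u
    have h1 : (1 + ‖u‖ₑ) = ENNReal.ofReal (1 + ‖u‖) := by
      rw [ENNReal.ofReal_add zero_le_one (norm_nonneg _)]; simp
    have hpos : 0 < 1 + ‖u‖ := by positivity
    have hge : 1 ≤ 1 + ‖u‖ := by simp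
    rw [h1, ← ofReal_norm, ENNReal.ofReal_rpow_of_pos hpos,
      ← ENNReal.ofReal_mul (norm_nonneg _), ENNReal.ofReal_rpow_of_nonneg (by positivity) (by linarith),
      ← ENNReal.ofReal_mul (by positivity)]
    apply ENNReal.ofReal_le_ofReal
    have h2 : ‖g u‖ * (1 + ‖u‖) ^ β ≤ C * (1 + ‖u‖) ^ (-((d : ℝ) + 1)) := by
      calc ‖g u‖ * (1 + ‖u‖) ^ β ≤ ‖g u‖ * (1 + ‖u‖) ^ (2 : ℝ) := by
            gcongr
        _ = ((1 + ‖u‖) ^ (d + 3) * ‖g u‖) * (1 + ‖u‖) ^ (-((d : ℝ) + 1)) := by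
            rw [← Real.rpow_natCast, mul_comm _ ‖g u‖, mul_assoc, ← Real.rpow_add hpos]
            congr 2
            push_cast; ring
        _ ≤ _ := by gcongr; exact hC u
    calc (‖g u‖ * (1 + ‖u‖) ^ β) ^ q ≤ (C * (1 + ‖u‖) ^ (-((d : ℝ) + 1))) ^ q := by gcongr
      _ = C ^ q * ((1 + ‖u‖) ^ (-((d : ℝ) + 1))) ^ q := by
        rw [Real.mul_rpow hC0 (by positivity)]
      _ ≤ _ := by
        gcongr
        conv_rhs => rw [← Real.rpow_one ((1 + ‖u‖) ^ (-((d : ℝ) + 1)))]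
        apply Real.rpow_le_rpow_of_exponent_ge (by positivity) _ hq
        exact Real.rpow_le_one_of_one_le_of_nonpos hge (by linarith [(Nat.cast_nonneg d : (0:ℝ) ≤ d)])
  refine ((lintegral_mono key).trans_lt ?_).ne
  rw [lintegral_const_mul' _ _ (by simp)]
  refine ENNReal.mul_lt_top (by simp) (finite_integral_one_add_norm (by simp))

lemma aux_gag_scale (d : ℕ) (r p : ℝ) (hp : 0 < p) (t : ℝ) (ht : 0 < t) (x : Ed d)
    (f : Ed d → ℂ) :
    gagliardo d r p (fun u => f (x + t⁻¹ • u)) =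
      ENNReal.ofReal (t ^ (-(r - d / p))) * gagliardo d r p f := by
  unfold gagliardo
  have hti : 0 < t⁻¹ := by positivity
  have h1 : ∀ u v : Ed d, (‖f (x + t⁻¹ • u) - f (x + t⁻¹ • v)‖₊ : ℝ≥0∞) ^ p /
      (‖u - v‖₊ : ℝ≥0∞) ^ (r * p + d) = ENNReal.ofReal (t ^ (-(r * p + d))) *
      ((‖f (x + t⁻¹ • u) - f (x + t⁻¹ • v)‖₊ : ℝ≥0∞) ^ p /
      (‖(x + t⁻¹ • u) - (x + t⁻¹ • v)‖₊ : ℝ≥0∞) ^ (r * p + d)) := by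
    intro u v
    have : (‖u - v‖₊ : ℝ≥0∞) = ENNReal.ofReal t * (‖(x + t⁻¹ • u) - (x + t⁻¹ • v)‖₊ : ℝ≥0∞) := by
      rw [add_sub_add_left_eq_sub, ← smul_sub]
      change ‖u - v‖ₑ = _ * ‖t⁻¹ • (u - v)‖ₑ
      rw [enorm_smul, ← mul_assoc, Real.enorm_eq_ofReal hti.le, ← ENNReal.ofReal_mul ht.le,
        mul_inv_cancel₀ ht.ne']; simp
    rw [this, ENNReal.mul_rpow_of_ne_top (by simp) (by simp), ENNReal.ofReal_rpow_of_pos ht,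
      Real.rpow_neg ht.le, ENNReal.ofReal_inv_of_pos (by positivity), div_eq_mul_inv,
      div_eq_mul_inv, ENNReal.mul_inv]
    · ring
    · left; simp; positivity
    · left; simp
  simp_rw [h1]
  have h2 : ∀ u : Ed d, ∫⁻ v : Ed d, ENNReal.ofReal (t ^ (-(r * p + d))) *
      ((‖f (x + t⁻¹ • u) - f (x + t⁻¹ • v)‖₊ : ℝ≥0∞) ^ p /
      (‖(x + t⁻¹ • u) - (x + t⁻¹ • v)‖₊ : ℝ≥0∞) ^ (r * p + d)) =
      ENNReal.ofReal (t ^ (-(r * p + d))) * (ENNReal.ofReal (t⁻¹ ^ (-(d : ℝ))) *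
      ∫⁻ v : Ed d, ((‖f (x + t⁻¹ • u) - f v‖₊ : ℝ≥0∞) ^ p /
      (‖(x + t⁻¹ • u) - v‖₊ : ℝ≥0∞) ^ (r * p + d))) := by
    intro u
    rw [lintegral_const_mul' _ _ (by simp)]
    congr 1
    rw [aux_lint_smul d t⁻¹ hti (fun v => ((‖f (x + t⁻¹ • u) - f (x + v)‖₊ : ℝ≥0∞) ^ p /
      (‖(x + t⁻¹ • u) - (x + v)‖₊ : ℝ≥0∞) ^ (r * p + d)))]
    congr 1
    exact lintegral_add_left_eq_self (fun v => ((‖f (x + t⁻¹ • u) - f v‖₊ : ℝ≥0∞) ^ p /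
      (‖(x + t⁻¹ • u) - v‖₊ : ℝ≥0∞) ^ (r * p + d))) x
  simp_rw [h2]
  rw [lintegral_const_mul' _ _ (by simp), lintegral_const_mul' _ _ (by simp)]
  rw [aux_lint_smul d t⁻¹ hti (fun u => ∫⁻ v : Ed d, ((‖f (x + u) - f v‖₊ : ℝ≥0∞) ^ p /
      (‖(x + u) - v‖₊ : ℝ≥0∞) ^ (r * p + d)))]
  rw [lintegral_add_left_eq_self (fun u => ∫⁻ v : Ed d, ((‖f u - f v‖₊ : ℝ≥0∞) ^ p /
      (‖u - v‖₊ : ℝ≥0∞) ^ (r * p + d))) x, ← mul_assoc, ← mul_assoc,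
    ENNReal.mul_rpow_of_nonneg _ _ (by positivity)]
  congr 1
  rw [← ENNReal.ofReal_mul (by positivity), ← ENNReal.ofReal_mul (by positivity),
    ENNReal.ofReal_rpow_of_pos (by positivity)]
  congr 1
  rw [Real.inv_rpow ht.le, ← Real.rpow_neg ht.le, ← Real.rpow_add ht, ← Real.rpow_add ht,
    ← Real.rpow_mul ht.le]
  congr 1
  field_simp
  ring


/-- The character `e^{2π i x·ξ}`. -/
noncomputable def auxE (d : ℕ) (x ξ : Ed d) : ℂ := Complex.exp (((2 * Real.pi * ⟪x, ξ⟫ : ℝ) : ℂ) * Complex.I)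

lemma auxE_norm (d : ℕ) (x ξ : Ed d) : ‖auxE d x ξ‖ = 1 := Complex.norm_exp_ofReal_mul_I _

lemma auxE_cont (d : ℕ) (x : Ed d) : Continuous (auxE d x) := by
  unfold auxE; fun_prop

lemma aux_ft (d : ℕ) (f : Ed d → ℂ) (ξ : Ed d) :
    ftransform d f ((2 * Real.pi) • ξ) = 𝓕 f ξ := by
  rw [Real.fourier_eq']
  unfold ftransform
  congr 1
  ext v
  rw [smul_eq_mul]
  congr 2
  rw [inner_smul_right]
  push_cast; ring

lemma aux_symbOp (d : ℕ) (a f : Ed d → ℂ)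
    (ha : ∀ (c : ℝ) (κ : Ed d), 0 < c → a (c • κ) = a κ) (x : Ed d) :
    symbOp d a f x = ∫ ξ, auxE d x ξ * a ξ * 𝓕 f ξ := by
  have hpi : 0 < 2 * Real.pi := by positivity
  have h := Measure.integral_comp_smul (volume : Measure (Ed d))
    (fun κ => Complex.exp (Complex.I * (⟪x, κ⟫ : ℂ)) * a κ * ftransform d f κ) (2 * Real.pi)
  simp only [finrank_euclideanSpace, Fintype.card_fin] at h
  unfold symbOp
  rw [abs_of_pos (by positivity), ← Real.rpow_natCast, ← Real.rpow_neg hpi.le,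
    Complex.real_smul] at h
  rw [← h]
  congr 1
  ext ξ
  rw [aux_ft, ha _ _ hpi, inner_smul_right]
  unfold auxE
  congr 3
  push_cast; ring

lemma aux_sob (d : ℕ) (f : Ed d → ℂ) :
    sobolevSemi d (-1) f = (∫⁻ ξ : Ed d, (‖(2 * Real.pi) • ξ‖ₑ ^ (-1 : ℝ) * ‖𝓕 f ξ‖ₑ) ^ (2 : ℝ)) ^
      ((1 : ℝ) / 2) := by
  have hpi : 0 < 2 * Real.pi := by positivity
  unfold sobolevSemi
  rw [← aux_lint_smul d _ hpi (fun κ => (‖κ‖₊ : ℝ≥0∞) ^ (2 * (-1 : ℝ)) *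
    (‖ftransform d f κ‖₊ : ℝ≥0∞) ^ (2 : ℕ))]
  congr 1
  refine lintegral_congr fun ξ => ?_
  rw [aux_ft, ENNReal.mul_rpow_of_nonneg _ _ (by norm_num), ← ENNReal.rpow_mul]
  norm_num
  rfl

lemma aux_low (d : ℕ) (hd : 1 ≤ d) (f : Ed d → ℂ) (hf : Continuous (𝓕 f)) (t : ℝ) (ht : 0 < t) :
    ∫⁻ ξ in Metric.closedBall (0 : Ed d) (2 * t), ‖𝓕 f ξ‖ₑ ≤
      ENNReal.ofReal ((2 * Real.pi * 2 * (2 ^ d * (volume (Metric.ball (0 : Ed d) 1)).toReal) ^ ((1:ℝ)/2)) *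
        t ^ (1 + (d : ℝ) / 2)) * sobolevSemi d (-1) f := by
  set h : Ed d → ℝ≥0∞ := fun ξ => ‖(2 * Real.pi) • ξ‖ₑ ^ (-1 : ℝ) * ‖𝓕 f ξ‖ₑ with hh
  have hm : Measurable h := by
    have := hf.measurable
    fun_prop
  have hpi : 0 < 2 * Real.pi := by positivity
  have h1 : ∀ ξ ∈ Metric.closedBall (0 : Ed d) (2 * t),
      ‖𝓕 f ξ‖ₑ ≤ ENNReal.ofReal (2 * Real.pi * (2 * t)) * h ξ := by
    intro ξ hξ
    have hξ' : ‖ξ‖ ≤ 2 * t := by simpa using hξ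
    by_cases h0 : ξ = 0
    · by_cases h00 : ‖𝓕 f ξ‖ₑ = 0
      · rw [h00]; exact zero_le
      · have : h ξ = ⊤ := by
          simp only [hh, h0]
          rw [smul_zero, enorm_zero, ENNReal.zero_rpow_of_neg (by norm_num), ENNReal.top_mul]
          rwa [h0] at h00
        rw [this, ENNReal.mul_top]
        · exact le_top
        · simp; positivity
    · have hn : ‖(2 * Real.pi) • ξ‖ₑ ≠ 0 := by simp [h0, Real.pi_ne_zero]
      have hn' : ‖(2 * Real.pi) • ξ‖ₑ ≠ ⊤ := by simp
      have e : ‖𝓕 f ξ‖ₑ = ‖(2 * Real.pi) • ξ‖ₑ * h ξ := by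
        simp only [hh]
        rw [ENNReal.rpow_neg_one, ← mul_assoc, ENNReal.mul_inv_cancel hn hn', one_mul]
      rw [e]
      gcongr
      rw [← ofReal_norm, norm_smul, Real.norm_of_nonneg hpi.le]
      gcongr
  have h2 : ∫⁻ ξ in Metric.closedBall (0 : Ed d) (2 * t), ‖𝓕 f ξ‖ₑ ≤
      ENNReal.ofReal (2 * Real.pi * (2 * t)) * ∫⁻ ξ in Metric.closedBall (0 : Ed d) (2 * t), h ξ := by
    rw [← lintegral_const_mul' _ _ (by simp)]
    exact setLIntegral_mono' Metric.isClosed_closedBall.measurableSet h1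
  have h3 : ∫⁻ ξ in Metric.closedBall (0 : Ed d) (2 * t), h ξ ≤ sobolevSemi d (-1) f *
      (volume (Metric.closedBall (0 : Ed d) (2 * t))) ^ ((1:ℝ)/2) := by
    have := ENNReal.lintegral_mul_le_Lp_mul_Lq
      (volume.restrict (Metric.closedBall (0 : Ed d) (2 * t)))
      (Real.HolderConjugate.two_two) (f := h) (g := fun _ => 1) hm.aemeasurable aemeasurable_const
    simp only [Pi.mul_apply, mul_one, ENNReal.one_rpow, lintegral_const, one_mul,
      Measure.restrict_apply MeasurableSet.univ, Set.univ_inter] at this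
    refine this.trans ?_
    rw [aux_sob]
    gcongr
    exact Measure.restrict_le_self
  refine h2.trans ((mul_le_mul_right h3 _).trans_eq ?_)
  have : Nontrivial (Ed d) := by
    have : Nonempty (Fin d) := ⟨⟨0, hd⟩⟩
    infer_instance
  rw [Measure.addHaar_closedBall _ _ (by positivity)]
  have hV : volume (Metric.ball (0 : Ed d) 1) ≠ ⊤ := measure_ball_lt_top.ne
  conv_lhs => rw [← ENNReal.ofReal_toReal hV]
  set V := (volume (Metric.ball (0 : Ed d) 1)).toReal
  have hV0 : 0 ≤ V := ENNReal.toReal_nonneg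
  rw [mul_comm (sobolevSemi d (-1) f), ← mul_assoc]
  congr 1
  rw [finrank_euclideanSpace, Fintype.card_fin, ← ENNReal.ofReal_mul (by positivity),
    ENNReal.ofReal_rpow_of_nonneg (by positivity) (by norm_num), ← ENNReal.ofReal_mul (by positivity)]
  congr 1
  rw [mul_pow, show (2:ℝ) ^ d * t ^ d * V = (2 ^ d * V) * t ^ d by ring,
    Real.mul_rpow (by positivity) (by positivity), Real.rpow_add ht, Real.rpow_one,
    ← Real.rpow_natCast t, ← Real.rpow_mul ht.le]
  rw [show (d : ℝ) * (1 / 2) = d / 2 by ring]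
  ring

lemma aux_fourier_g (d : ℕ) (f : Ed d → ℂ) (x : Ed d) (t : ℝ) (ht : 0 < t) (ξ : Ed d) :
    𝓕 (fun u => f (x + t⁻¹ • u)) ξ = (t ^ d : ℝ) • (auxE d x (t • ξ) * 𝓕 f (t • ξ)) := by
  rw [Real.fourier_eq', Real.fourier_eq']
  have h := Measure.integral_comp_smul (volume : Measure (Ed d))
    (fun y => auxE d x (t • ξ) * (Complex.exp (((-2 * Real.pi * ⟪x + y, t • ξ⟫ : ℝ) : ℂ) * Complex.I) •
      f (x + y))) t⁻¹
  rw [integral_add_left_eq_self (fun y => auxE d x (t • ξ) *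
    (Complex.exp (((-2 * Real.pi * ⟪y, t • ξ⟫ : ℝ) : ℂ) * Complex.I) • f y)) x,
    integral_const_mul (auxE d x (t • ξ)) (fun y =>
    (Complex.exp (((-2 * Real.pi * ⟪y, t • ξ⟫ : ℝ) : ℂ) * Complex.I) • f y))] at h
  simp only [finrank_euclideanSpace, Fintype.card_fin, inv_pow, inv_inv] at h
  rw [abs_of_pos (by positivity)] at h
  rw [← h]
  congr 1
  ext u
  simp only [smul_eq_mul, auxE]
  rw [← mul_assoc, ← Complex.exp_add]
  congr 2
  rw [inner_add_left, inner_smul_left, inner_smul_right, inner_smul_right]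
  have := ht.ne'
  simp only [conj_trivial]
  rw [← add_mul, ← Complex.ofReal_add]
  congr 2
  field_simp
  ring

lemma aux_fubini (d : ℕ) (m f : SchwartzMap (Ed d) ℂ) (x : Ed d) (t : ℝ) (ht : 0 < t) :
    ∫ ξ, auxE d x ξ * m (t⁻¹ • ξ) * 𝓕 (⇑f) ξ = ∫ u, (𝓕 m) u * f (x + t⁻¹ • u) := by
  have hti : t⁻¹ ≠ 0 := by positivity
  have hg : Integrable (fun u : Ed d => f (x + t⁻¹ • u)) :=
    (f.integrable.comp_add_left x).comp_smul hti
  have h := VectorFourier.integral_fourierIntegral_smul_eq_flip (L := innerₗ (Ed d))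
      Real.continuous_fourierChar continuous_inner (m.integrable (μ := volume)) hg
  have h' : ∫ u, (𝓕 m) u * f (x + t⁻¹ • u) =
      ∫ ξ, m ξ * 𝓕 (fun u => f (x + t⁻¹ • u)) ξ := by
    simpa using! h
  rw [h']
  simp_rw [aux_fourier_g d f x t ht]
  have h2 := Measure.integral_comp_smul (volume : Measure (Ed d))
    (fun ξ => auxE d x ξ * m (t⁻¹ • ξ) * 𝓕 (⇑f) ξ) t
  simp only [finrank_euclideanSpace, Fintype.card_fin] at h2
  rw [abs_of_pos (by positivity)] at h2
  have h3 : ∫ ξ, auxE d x ξ * m (t⁻¹ • ξ) * 𝓕 (⇑f) ξ =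
      (t ^ d : ℝ) • ((t ^ d : ℝ)⁻¹ • ∫ ξ, auxE d x ξ * m (t⁻¹ • ξ) * 𝓕 (⇑f) ξ) := by
    rw [smul_smul, mul_inv_cancel₀ (by positivity), one_smul]
  rw [h3, ← h2, ← integral_smul]
  congr 1
  ext ξ
  rw [smul_smul, inv_mul_cancel₀ ht.ne', one_smul]
  simp only [Complex.real_smul]
  ring

lemma aux_int_fourier (d : ℕ) (m : SchwartzMap (Ed d) ℂ) : ∫ u, (𝓕 m) u = m 0 := by
  have h : 𝓕⁻ (𝓕 m) = m := FourierTransform.fourierInv_fourier_eq m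
  have h2 : (𝓕⁻ (𝓕 m)) 0 = m 0 := by rw [h]
  rw [SchwartzMap.fourierInv_coe, Real.fourierInv_eq'] at h2
  simpa using h2

lemma aux_hi (d : ℕ) (r p : ℝ) (hr0 : 0 < r) (hr1 : r < 1) (hp : 2 ≤ p)
    (hrp : r > d / p) (m χ : SchwartzMap (Ed d) ℂ) (hm : m 0 = 0) (hχ : χ 0 = 1) :
    ∃ M : ℝ, 0 ≤ M ∧ ∀ (f : SchwartzMap (Ed d) ℂ) (x : Ed d) (t : ℝ), 0 < t →
      ‖∫ ξ, auxE d x ξ * m (t⁻¹ • ξ) * 𝓕 (⇑f) ξ‖ₑ ≤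
        ENNReal.ofReal (M * t ^ (-(r - d / p))) * gagliardo d r p f := by
  have hpq : p.HolderConjugate p.conjExponent := Real.HolderConjugate.conjExponent (by linarith)
  set q := p.conjExponent
  set I : ℝ≥0∞ := ((∫⁻ u, (‖(𝓕 χ) u‖ₑ * (1 + ‖u‖ₑ) ^ (r + d / p)) ^ q) *
        ∫⁻ u, (‖(𝓕 m) u‖ₑ * (1 + ‖u‖ₑ) ^ (r + d / p)) ^ q) ^ (1 / q) with hI
  have hIt : I ≠ ⊤ := by
    refine ENNReal.rpow_ne_top_of_nonneg (by have := hpq.symm.pos; positivity) (ENNReal.mul_ne_top ?_ ?_)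
    · exact aux_weight d _ q (by linarith) hpq.symm.lt.le _
    · exact aux_weight d _ q (by linarith) hpq.symm.lt.le _
  refine ⟨I.toReal, ENNReal.toReal_nonneg, fun f x t ht => ?_⟩
  rw [aux_fubini d m f x t ht]
  obtain ⟨B, -, hB⟩ := f.decay 0 0
  have := aux_unit d r p q hr0 hpq (𝓕 m : SchwartzMap (Ed d) ℂ) (𝓕 χ : SchwartzMap (Ed d) ℂ) (fun u => f (x + t⁻¹ • u)) (𝓕 m).continuous
    (𝓕 χ).continuous (by have := f.continuous; fun_prop) (𝓕 m).integrable
    (by rw [aux_int_fourier, hm]) (by rw [aux_int_fourier, hχ]) B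
    (fun u => by simpa using hB (x + t⁻¹ • u))
  refine this.trans_eq ?_
  rw [aux_gag_scale d r p (by linarith) t ht x f, ENNReal.ofReal_mul ENNReal.toReal_nonneg,
    ENNReal.ofReal_toReal hIt, ← hI]
  ring


lemma aux_opt (N s A B V C₁ C₂ : ℝ) (hN : 0 < N) (hs : 0 < s) (hA : 0 < A) (hB : 0 ≤ B)
    (h : ∀ t : ℝ, 0 < t → V ≤ C₁ * t ^ N * A + C₂ * t ^ (-s) * B) :
    V ≤ (C₁ + C₂) * A ^ (s / (s + N)) * B ^ (1 - s / (s + N)) := by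
  have hsN : 0 < s + N := by positivity
  have hγ : 1 - s / (s + N) = N / (s + N) := by field_simp; ring
  rcases hB.eq_or_lt with hB0 | hB0
  · subst hB0
    rw [hγ, Real.zero_rpow (by positivity), mul_zero]
    simp only [mul_zero, add_zero] at h
    have ht : Tendsto (fun t : ℝ => C₁ * t ^ N * A) (𝓝[>] 0) (𝓝 (C₁ * 0 ^ N * A)) := by
      have : ContinuousAt (fun t : ℝ => C₁ * t ^ N * A) 0 := by
        have := Real.continuousAt_rpow_const 0 N (Or.inr hN.le)
        fun_prop
      exact this.tendsto.mono_left nhdsWithin_le_nhds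
    rw [Real.zero_rpow hN.ne'] at ht
    simp only [mul_zero, zero_mul] at ht
    refine ge_of_tendsto ht ?_
    filter_upwards [self_mem_nhdsWithin] with t ht using h t ht
  · have h1 := h ((B / A) ^ (1 / (s + N))) (by positivity)
    have e1 : ((B / A) ^ (1 / (s + N))) ^ N * A = A ^ (s / (s + N)) * B ^ (N / (s + N)) := by
      rw [← Real.rpow_mul (by positivity), Real.div_rpow hB hA.le,
        show 1 / (s + N) * N = N / (s + N) by ring,
        show s / (s + N) = 1 - N / (s + N) by field_simp; ring, Real.rpow_sub hA, Real.rpow_one]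
      ring
    have e2 : ((B / A) ^ (1 / (s + N))) ^ (-s) * B = A ^ (s / (s + N)) * B ^ (N / (s + N)) := by
      rw [← Real.rpow_mul (by positivity), Real.div_rpow hB hA.le,
        show 1 / (s + N) * (-s) = -(s / (s + N)) by ring,
        show N / (s + N) = 1 - s / (s + N) by field_simp; ring, Real.rpow_sub hB0, Real.rpow_one,
        Real.rpow_neg hA.le, Real.rpow_neg hB]
      field_simp
    rw [mul_assoc, e1, mul_assoc, e2] at h1
    rw [hγ]
    linarith

lemma aux_bdd (d : ℕ) (a : Ed d → ℂ) (ha : IsSymbol0 d a) : ∃ M : ℝ, 0 ≤ M ∧ ∀ ξ, ‖a ξ‖ ≤ M := by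
  have hc : ContinuousOn a (Metric.sphere 0 1) :=
    ha.1.continuousOn.mono (fun x hx => by
      simp only [Set.mem_compl_iff, Set.mem_singleton_iff]
      rintro rfl
      simp at hx)
  obtain ⟨M, hM⟩ := (isCompact_sphere (0 : Ed d) 1).exists_bound_of_continuousOn hc
  refine ⟨max M ‖a 0‖, le_max_of_le_right (norm_nonneg _), fun ξ => ?_⟩
  by_cases h0 : ξ = 0
  · rw [h0]; exact le_max_right _ _
  · have hn : 0 < ‖ξ‖ := norm_pos_iff.mpr h0
    rw [← ha.2 ‖ξ‖⁻¹ ξ (by positivity) h0]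
    refine (hM _ ?_).trans (le_max_left _ _)
    simp [norm_smul, hn.ne']

lemma aux_meas (d : ℕ) (a : Ed d → ℂ) (ha : IsSymbol0 d a) : Measurable a := by
  refine measurable_of_continuousOn_compl_singleton 0 ha.1.continuousOn

lemma aux_smooth (d : ℕ) (a : Ed d → ℂ) (ha : IsSymbol0 d a) (φ : Ed d → ℂ)
    (hφ : ContDiff ℝ (⊤ : ℕ∞) φ) (h0 : φ =ᶠ[𝓝 0] 0) :
    ContDiff ℝ (⊤ : ℕ∞) (fun ξ => a ξ * φ ξ) := by
  rw [contDiff_iff_contDiffAt]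
  intro ξ
  by_cases h : ξ = 0
  · subst h
    refine (contDiffAt_const (c := (0 : ℂ))).congr_of_eventuallyEq ?_
    filter_upwards [h0] with y hy
    simp [hy]
  · exact (ha.1.contDiffAt (isOpen_compl_singleton.mem_nhds h)).mul hφ.contDiffAt

lemma aux_main (d : ℕ) (hd : 1 ≤ d) (r p : ℝ) (hr0 : 0 < r) (hr1 : r < 1) (hp : 2 ≤ p)
    (hrp : r > d / p) (a : Ed d → ℂ) (ha : IsSymbol0 d a) :
    ∃ C₁ C₂ : ℝ, 0 ≤ C₁ ∧ 0 ≤ C₂ ∧ ∀ f : SchwartzMap (Ed d) ℂ,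
      sobolevSemi d (-1) ⇑f ≠ ⊤ → gagliardo d r p f ≠ ⊤ → ∀ x t, 0 < t →
      ‖symbOp d a f x‖ ≤ C₁ * t ^ (1 + (d : ℝ) / 2) * (sobolevSemi d (-1) f).toReal +
        C₂ * t ^ (-(r - d / p)) * (gagliardo d r p f).toReal := by
  have hhom : ∀ (c : ℝ) (κ : Ed d), 0 < c → a (c • κ) = a κ := by
    intro c κ hc
    by_cases h : κ = 0
    · simp [h]
    · exact ha.2 c κ hc h
  obtain ⟨Ma, hMa0, hMa⟩ := aux_bdd d a ha
  have ham := aux_meas d a ha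
  let b : ContDiffBump (0 : Ed d) := ⟨1, 2, one_pos, one_lt_two⟩
  let X : Ed d → ℂ := fun ξ => ((b ξ : ℝ) : ℂ)
  have hXs : ContDiff ℝ (⊤ : ℕ∞) X := Complex.ofRealCLM.contDiff.comp b.contDiff
  have hXc : HasCompactSupport X := b.hasCompactSupport.comp_left (g := fun y : ℝ => (y : ℂ)) (by simp)
  have hX1 : ∀ ξ, ‖ξ‖ ≤ 1 → X ξ = 1 := by
    intro ξ hξ
    simp only [X]
    rw [b.one_of_mem_closedBall (by simpa [b] using hξ)]; simp
  have hX0 : ∀ ξ, 2 < ‖ξ‖ → X ξ = 0 := by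
    intro ξ hξ
    simp only [X]
    rw [b.zero_of_le_dist (by simpa [b] using hξ.le)]; simp
  have hXn : ∀ ξ, ‖X ξ‖ ≤ 1 := by
    intro ξ
    simp only [X, Complex.norm_real, Real.norm_eq_abs, abs_of_nonneg b.nonneg]
    exact b.le_one
  let φ : Ed d → ℂ := fun ξ => X ((2:ℝ)⁻¹ • ξ) - X ξ
  have hφs : ContDiff ℝ (⊤ : ℕ∞) φ := (hXs.comp (contDiff_const_smul _)).sub hXs
  have hφ0 : φ =ᶠ[𝓝 0] 0 := by
    filter_upwards [Metric.closedBall_mem_nhds (0 : Ed d) one_pos] with ξ hξ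
    have hξ : ‖ξ‖ ≤ 1 := by simpa using hξ
    simp only [φ, Pi.zero_apply]
    rw [hX1 ξ hξ, hX1, sub_self]
    rw [norm_smul]; norm_num; linarith
  have hφc : HasCompactSupport φ :=
    (hXc.comp_smul (c := (2:ℝ)⁻¹) (by norm_num)).sub hXc
  have hmc : HasCompactSupport (fun ξ => a ξ * φ ξ) := hφc.mul_left
  let m : SchwartzMap (Ed d) ℂ := hmc.toSchwartzMap (aux_smooth d a ha φ hφs hφ0)
  let χ : SchwartzMap (Ed d) ℂ := hXc.toSchwartzMap hXs
  have hm0 : m 0 = 0 := by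
    change a 0 * φ 0 = 0
    rw [hφ0.self_of_nhds]; simp
  have hχ1 : χ 0 = 1 := hX1 0 (by simp)
  obtain ⟨M, hM0, hM⟩ := aux_hi d r p hr0 hr1 hp hrp m χ hm0 hχ1
  have hs : 0 < r - d / p := by linarith
  set s := r - d / p
  set ρ : ℝ := 2 ^ (-s)
  have hρ0 : 0 < ρ := by positivity
  have hρ : ρ < 1 := Real.rpow_lt_one_of_one_lt_of_neg one_lt_two (by linarith)
  set K : ℝ := 2 * Real.pi * 2 * (2 ^ d * (volume (Metric.ball (0 : Ed d) 1)).toReal) ^ ((1:ℝ)/2)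
  have hK : 0 ≤ K := by positivity
  refine ⟨Ma * K, M / (1 - ρ), by positivity, div_nonneg hM0 (by linarith), ?_⟩
  intro f hS hG x t ht
  set S := sobolevSemi d (-1) ⇑f
  set G := gagliardo d r p ⇑f
  have hFc : Continuous (𝓕 (⇑f)) := (𝓕 f).continuous
  have hFi : Integrable (𝓕 (⇑f)) := (𝓕 f).integrable
  let T : ℝ → ℂ := fun t => ∫ ξ, auxE d x ξ * (a ξ * X (t⁻¹ • ξ)) * 𝓕 (⇑f) ξ
  have hmeas : ∀ t : ℝ, AEStronglyMeasurable
      (fun ξ => auxE d x ξ * (a ξ * X (t⁻¹ • ξ)) * 𝓕 (⇑f) ξ) volume := by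
    intro t
    have h1 := (auxE_cont d x).measurable
    have h2 := hXs.continuous.measurable
    have h3 := hFc.measurable
    apply Measurable.aestronglyMeasurable
    fun_prop
  have hbd : ∀ (t : ℝ) (ξ : Ed d), ‖auxE d x ξ * (a ξ * X (t⁻¹ • ξ)) * 𝓕 (⇑f) ξ‖ ≤ Ma * ‖𝓕 (⇑f) ξ‖ := by
    intro t ξ
    rw [norm_mul, norm_mul, norm_mul, auxE_norm, one_mul]
    gcongr
    calc _ ≤ Ma * 1 := mul_le_mul (hMa ξ) (hXn _) (norm_nonneg _) hMa0
      _ = Ma := mul_one _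
  have hTint : ∀ t : ℝ, Integrable (fun ξ => auxE d x ξ * (a ξ * X (t⁻¹ • ξ)) * 𝓕 (⇑f) ξ) :=
    fun t => (hFi.norm.const_mul Ma).mono' (hmeas t) (Eventually.of_forall (hbd t))
  -- low frequencies
  have hlow : ‖T t‖ ≤ Ma * K * t ^ (1 + (d : ℝ) / 2) * S.toReal := by
    have h1 : ‖T t‖ₑ ≤ ENNReal.ofReal Ma *
        ∫⁻ ξ in Metric.closedBall (0 : Ed d) (2 * t), ‖𝓕 (⇑f) ξ‖ₑ := by
      refine (enorm_integral_le_lintegral_enorm _).trans ?_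
      rw [← lintegral_const_mul' _ _ (by simp),
        ← lintegral_indicator Metric.isClosed_closedBall.measurableSet]
      refine lintegral_mono fun ξ => ?_
      by_cases hξ : ξ ∈ Metric.closedBall (0 : Ed d) (2 * t)
      · rw [Set.indicator_of_mem hξ, ← ofReal_norm, ← ofReal_norm, ← ENNReal.ofReal_mul hMa0]
        exact ENNReal.ofReal_le_ofReal (hbd t ξ)
      · rw [Set.indicator_of_notMem hξ, hX0]
        · simp
        · simp only [Metric.mem_closedBall, dist_zero_right, not_le] at hξ
          rw [norm_smul, norm_inv, Real.norm_of_nonneg ht.le, inv_mul_eq_div, lt_div_iff₀ ht]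
          exact hξ
    have h2 : ‖T t‖ₑ ≤ ENNReal.ofReal Ma * (ENNReal.ofReal (K * t ^ (1 + (d : ℝ) / 2)) * S) :=
      h1.trans (mul_le_mul_right (aux_low d hd f hFc t ht) _)
    rw [← mul_assoc, ← ENNReal.ofReal_mul hMa0, ← ofReal_norm, ← ENNReal.ofReal_toReal hS,
      ← ENNReal.ofReal_mul (by positivity), ENNReal.ofReal_le_ofReal_iff (by positivity)] at h2
    linarith
  -- dyadic differences
  have hdiff : ∀ τ : ℝ, 0 < τ → ‖T (2 * τ) - T τ‖ ≤ M * τ ^ (-s) * G.toReal := by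
    intro τ hτ
    have h1 : T (2 * τ) - T τ = ∫ ξ, auxE d x ξ * m (τ⁻¹ • ξ) * 𝓕 (⇑f) ξ := by
      simp only [T]
      rw [← integral_sub (hTint _) (hTint _)]
      congr 1
      ext ξ
      change _ = auxE d x ξ * (a (τ⁻¹ • ξ) * (X ((2:ℝ)⁻¹ • τ⁻¹ • ξ) - X (τ⁻¹ • ξ))) * 𝓕 (⇑f) ξ
      rw [hhom _ _ (by positivity), smul_smul, mul_inv]
      ring
    have h2 : ‖∫ ξ, auxE d x ξ * m (τ⁻¹ • ξ) * 𝓕 (⇑f) ξ‖ₑ ≤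
        ENNReal.ofReal (M * τ ^ (-s)) * G := hM f x τ hτ
    rw [← h1, ← ofReal_norm, ← ENNReal.ofReal_toReal hG,
      ← ENNReal.ofReal_mul (by positivity), ENNReal.ofReal_le_ofReal_iff (by positivity)] at h2
    exact h2
  have hlim : Tendsto (fun n : ℕ => T (2 ^ n * t)) atTop (𝓝 (symbOp d a f x)) := by
    rw [aux_symbOp d a f hhom x]
    refine tendsto_integral_of_dominated_convergence (fun ξ => Ma * ‖𝓕 (⇑f) ξ‖)
      (fun n => hmeas _) (hFi.norm.const_mul Ma) (fun n => Eventually.of_forall (hbd _))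
      (Eventually.of_forall fun ξ => ?_)
    refine tendsto_const_nhds.congr' ?_
    have h2 : Tendsto (fun n : ℕ => (2:ℝ) ^ n * t) atTop atTop :=
      (tendsto_pow_atTop_atTop_of_one_lt (by norm_num : (1:ℝ) < 2)).atTop_mul_const ht
    filter_upwards [h2.eventually_ge_atTop ‖ξ‖] with n hn
    rw [hX1, mul_one]
    have hpos : 0 < (2:ℝ) ^ n * t := by positivity
    rw [norm_smul, norm_inv, Real.norm_of_nonneg hpos.le, inv_mul_eq_div, div_le_one hpos]
    exact hn
  have hgeo := dist_le_of_le_geometric_of_tendsto₀ ρ (M * t ^ (-s) * G.toReal) hρ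
    (f := fun n : ℕ => T (2 ^ n * t)) (fun n => by
      rw [dist_comm, dist_eq_norm, pow_succ', mul_assoc]
      refine (hdiff _ (by positivity)).trans_eq ?_
      rw [Real.mul_rpow (by positivity) ht.le, ← Real.rpow_natCast, ← Real.rpow_mul (by norm_num),
        mul_comm (n : ℝ), Real.rpow_mul (by norm_num), Real.rpow_natCast]
      ring) hlim
  simp only [pow_zero, one_mul] at hgeo
  rw [dist_comm, dist_eq_norm] at hgeo
  calc ‖symbOp d a f x‖ = ‖T t + (symbOp d a f x - T t)‖ := by congr 1; ring
    _ ≤ ‖T t‖ + ‖symbOp d a f x - T t‖ := norm_add_le _ _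
    _ ≤ _ := add_le_add hlow hgeo
    _ = _ := by ring

/-- For a symbol `a ∈ S⁰_{ph}`, `0 < r < 1`, `2 ≤ p < ∞` with `r > d/p`,
and `γ₁ = (r − d/p)/(r + 1 + d(p−2)/(2p))`, one has the interpolation estimate
`‖𝔞[f]‖_∞ ≤ C [f]_{−1}^{γ₁} [f]_{r,p}^{1−γ₁}` for Schwartz `f` with `[f]_{−1} < ∞`. -/
theorem stmt5 (d : ℕ) (hd : 1 ≤ d) (r p : ℝ) (hr0 : 0 < r) (hr1 : r < 1) (hp : 2 ≤ p)
    (hrp : r > d / p) (a : Ed d → ℂ) (ha : IsSymbol0 d a) :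
    ∃ C : ℝ, 0 < C ∧ ∀ f : SchwartzMap (Ed d) ℂ,
      sobolevSemi d (-1) ⇑f ≠ ⊤ →
      (⨆ x, (‖symbOp d a (⇑f) x‖₊ : ℝ≥0∞))
        ≤ ENNReal.ofReal C *
            sobolevSemi d (-1) ⇑f ^ ((r - d / p) / (r + 1 + d * (p - 2) / (2 * p))) *
            gagliardo d r p ⇑f ^ (1 - (r - d / p) / (r + 1 + d * (p - 2) / (2 * p))) := by

  have hd0 : (0 : ℝ) < d := by exact_mod_cast hd
  have hp0 : 0 < p := by linarith
  have hs : 0 < r - d / p := by linarith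
  have hN : (0 : ℝ) < 1 + d / 2 := by positivity
  have hγ : (r - d / p) / (r + 1 + d * (p - 2) / (2 * p)) =
      (r - d / p) / ((r - d / p) + (1 + d / 2)) := by
    congr 1; field_simp; ring
  rw [hγ]
  have hγ0 : 0 < (r - d / p) / ((r - d / p) + (1 + d / 2)) := by positivity
  have hγ1 : 0 < 1 - (r - d / p) / ((r - d / p) + (1 + d / 2)) := by
    rw [sub_pos, div_lt_one (by positivity)]; linarith
  obtain ⟨C₁, C₂, hC₁, hC₂, h⟩ := aux_main d hd r p hr0 hr1 hp hrp a ha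
  refine ⟨C₁ + C₂ + 1, by positivity, fun f hS => iSup_le fun x => ?_⟩
  change ‖symbOp d a f x‖ₑ ≤ _
  have hhom : ∀ (c : ℝ) (κ : Ed d), 0 < c → a (c • κ) = a κ := by
    intro c κ hc
    by_cases h : κ = 0
    · simp [h]
    · exact ha.2 c κ hc h
  have hFc : Continuous (𝓕 (⇑f)) := (𝓕 f).continuous
  by_cases hS0 : sobolevSemi d (-1) ⇑f = 0
  · have h0 : symbOp d a f x = 0 := by
      rw [aux_symbOp d a f hhom x]
      rw [aux_sob, ENNReal.rpow_eq_zero_iff_of_pos (by norm_num), lintegral_eq_zero_iff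
        (by have := hFc.measurable; fun_prop)] at hS0
      apply integral_eq_zero_of_ae
      filter_upwards [hS0] with ξ hξ
      simp only [Pi.zero_apply] at hξ
      rw [ENNReal.rpow_eq_zero_iff_of_pos (by norm_num), mul_eq_zero] at hξ
      rcases hξ with hξ | hξ
      · rw [ENNReal.rpow_neg_one, ENNReal.inv_eq_zero] at hξ
        simp at hξ
      · simp [enorm_eq_zero.mp hξ]
    rw [h0]; simp
  by_cases hG : gagliardo d r p ⇑f = ⊤
  · rw [hG, ENNReal.top_rpow_of_pos hγ1, ENNReal.mul_top]
    · exact le_top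
    · apply mul_ne_zero
      · simp; positivity
      · rw [Ne, ENNReal.rpow_eq_zero_iff_of_pos hγ0]; exact hS0
  have hA : 0 < (sobolevSemi d (-1) ⇑f).toReal := ENNReal.toReal_pos hS0 hS
  have hV := aux_opt (1 + d / 2) (r - d / p) _ _ _ C₁ C₂ hN hs hA ENNReal.toReal_nonneg
    (fun t ht => h f hS hG x t ht)
  conv_rhs => rw [← ENNReal.ofReal_toReal hS, ← ENNReal.ofReal_toReal hG]
  rw [ENNReal.ofReal_rpow_of_nonneg ENNReal.toReal_nonneg hγ0.le,
    ENNReal.ofReal_rpow_of_nonneg ENNReal.toReal_nonneg hγ1.le, ← ENNReal.ofReal_mul (by positivity),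
    ← ENNReal.ofReal_mul (by positivity), ← ofReal_norm]
  apply ENNReal.ofReal_le_ofReal
  refine hV.trans ?_
  rw [mul_assoc, mul_assoc]
  exact mul_le_mul_of_nonneg_right (by linarith) (by positivity)
end
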